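/- arXiv:1709.00748 — 2 statements merged into one kernel-verified Lean document; each statement's English description precedes it below -/
import Mathlib

section
/- Let n ≥ 2 and let β ≥ 0 and α be real numbers such that either (n−3)/2 < β < (n−1)/2 and α ≤ 2β − (n−3)/2, or β ≥ (n−1)/2 and α < β + 1. Then there exist λ with 0 < λ < 1 (depending on β and α) and a constant C (depending on n, α, β and χ) such that for all Schwartz functions f₁, f₂ on ℝⁿ and every r ∈ (0,∞), ‖ χ(·) K_r(f̂₁, f̂₂)(·) ‖_{L²_α} ≤ C r^{λ} ‖f₁‖_{W^{β,2}_1} ‖f₂‖_{W^{β,2}_1}. -/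
open MeasureTheory Filter Set
open scoped ENNReal RealInnerProductSpace

noncomputable section

abbrev Euc (n : ℕ) := EuclideanSpace ℝ (Fin n)

/-- The Japanese bracket `⟨x⟩ = (1+|x|²)^{1/2}`. -/
def jap {n : ℕ} (x : Euc n) : ℝ := Real.sqrt (1 + ‖x‖ ^ 2)

/-- The Ewald sphere measure `σ_{rη}`: the `(n-1)`-dimensional Hausdorff measure restricted
to `Γ_r(η) = {ξ : |ξ - η/2| = r|η|/2}`. -/
def ewaldM (n : ℕ) (r : ℝ) (η : Euc n) : Measure (Euc n) :=
  (MeasureTheory.Measure.hausdorffMeasure ((n : ℝ) - 1)).restrict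
    (Metric.sphere ((2 : ℝ)⁻¹ • η) (r * ‖η‖ / 2))

/-- The Fourier transform `f̂(ξ) = ∫ e^{-iξ·x} f(x) dx`. -/
def ft {n : ℕ} (f : Euc n → ℂ) (ξ : Euc n) : ℂ :=
  ∫ x : Euc n, Complex.exp (-Complex.I * ((⟪ξ, x⟫ : ℝ) : ℂ)) * f x

/-- `⟨D⟩^β f`: inverse Fourier transform of `⟨ξ⟩^β f̂(ξ)`. -/
def besselD {n : ℕ} (β : ℝ) (f : Euc n → ℂ) (x : Euc n) : ℂ :=
  (((2 * Real.pi) ^ n : ℝ)⁻¹ : ℝ) •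
    ∫ ξ : Euc n, Complex.exp (Complex.I * ((⟪ξ, x⟫ : ℝ) : ℂ)) *
      (((jap ξ ^ β : ℝ) : ℂ) * ft f ξ)

/-- The weighted Sobolev norm `‖f‖_{W^{β,2}_δ} = ‖⟨·⟩^δ ⟨D⟩^β f‖_{L²}`. -/
def wSobNorm {n : ℕ} (β δ : ℝ) (f : Euc n → ℂ) : ℝ≥0∞ :=
  eLpNorm (fun x : Euc n => (jap x ^ δ : ℝ) • besselD β f x) 2 volume

/-- The spherical operator
`S_r(q)(η) = (2/(|η|(1+r))) ∫_{Γ_r(η)} q̂(ξ) q̂(η-ξ) dσ_{rη}(ξ)`. -/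
def Sr {n : ℕ} (r : ℝ) (q : Euc n → ℂ) (η : Euc n) : ℂ :=
  ((2 / (‖η‖ * (1 + r))) : ℝ) • ∫ ξ, ft q ξ * ft q (η - ξ) ∂(ewaldM n r η)

/-- `K_r(g₁,g₂)(η) = (1/|η|) ∫_{Γ_r(η)} |g₁(ξ)||g₂(η-ξ)| dσ_{rη}(ξ)`. -/
def Kr {n : ℕ} (r : ℝ) (g₁ g₂ : Euc n → ℂ) (η : Euc n) : ℝ :=
  ‖η‖⁻¹ * ∫ ξ, ‖g₁ ξ‖ * ‖g₂ (η - ξ)‖ ∂(ewaldM n r η)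

open scoped FourierTransform LineDeriv


lemma nrm_diff {E : Type*} [NormedAddCommGroup E] [NormedSpace ℝ E] (a b : E) (ha : a ≠ 0)
    (hb : b ≠ 0) : ‖‖a‖⁻¹ • a - ‖b‖⁻¹ • b‖ ≤ 2 * ‖a - b‖ / ‖b‖ := by
  have h1 : ‖a‖⁻¹ • a - ‖b‖⁻¹ • b = ‖b‖⁻¹ • (a - b) + (‖a‖⁻¹ - ‖b‖⁻¹) • a := by
    rw [smul_sub, sub_smul]; abel
  have ha' : 0 < ‖a‖ := norm_pos_iff.2 ha
  have hb' : 0 < ‖b‖ := norm_pos_iff.2 hb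
  rw [h1]
  refine (norm_add_le _ _).trans ?_
  rw [norm_smul, norm_smul, norm_inv, norm_norm, Real.norm_eq_abs]
  have h2 : |‖a‖⁻¹ - ‖b‖⁻¹| * ‖a‖ = |‖b‖ - ‖a‖| / ‖b‖ := by
    have : ‖a‖⁻¹ - ‖b‖⁻¹ = (‖b‖ - ‖a‖) / (‖a‖ * ‖b‖) := by field_simp
    rw [this, abs_div, abs_of_pos (mul_pos ha' hb')]; field_simp
  rw [h2]
  have h3 : |‖b‖ - ‖a‖| ≤ ‖a - b‖ := by rw [abs_sub_comm]; exact abs_norm_sub_norm_le a b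
  have h4 : |‖b‖ - ‖a‖| / ‖b‖ ≤ ‖a - b‖ / ‖b‖ := by gcongr
  have : 2 * ‖a - b‖ / ‖b‖ = ‖b‖⁻¹ * ‖a-b‖ + ‖a - b‖ / ‖b‖ := by field_simp; ring
  linarith

def sg (b : Bool) : ℝ := if b then 1 else -1

lemma sg_abs (b : Bool) : |sg b| = 1 := by cases b <;> simp [sg]
lemma sg_sq (b : Bool) : sg b * sg b = 1 := by cases b <;> simp [sg]

/-- cube chart -/
def Pch {m : ℕ} (p : Fin (m+1) × Bool) (y : Fin m → ℝ) : Euc (m+1) :=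
  WithLp.toLp 2 (Fin.insertNth (α := fun _ => ℝ) p.1 (sg p.2) y)

def Nch {m : ℕ} (p : Fin (m+1) × Bool) (y : Fin m → ℝ) : Euc (m+1) := ‖Pch p y‖⁻¹ • Pch p y

lemma Pch_same {m : ℕ} (p : Fin (m+1) × Bool) (y : Fin m → ℝ) : Pch p y p.1 = sg p.2 := by
  simp [Pch]
lemma Pch_succ {m : ℕ} (p : Fin (m+1) × Bool) (y : Fin m → ℝ) (j : Fin m) :
    Pch p y (p.1.succAbove j) = y j := by
  simp [Pch]

lemma Pch_norm_ge {m : ℕ} (p : Fin (m+1) × Bool) (y : Fin m → ℝ) : 1 ≤ ‖Pch p y‖ := by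
  have := PiLp.norm_apply_le (Pch p y) p.1
  rwa [Pch_same, Real.norm_eq_abs, sg_abs] at this

lemma Pch_pos {m : ℕ} (p : Fin (m+1) × Bool) (y : Fin m → ℝ) : 0 < ‖Pch p y‖ :=
  lt_of_lt_of_le one_pos (Pch_norm_ge p y)

lemma Pch_ne {m : ℕ} (p : Fin (m+1) × Bool) (y : Fin m → ℝ) : Pch p y ≠ 0 :=
  norm_pos_iff.1 (Pch_pos p y)

lemma Pch_norm_le {m : ℕ} (p : Fin (m+1) × Bool) (y : Fin m → ℝ) (hy : y ∈ Icc (-1) 1) :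
    ‖Pch p y‖ ≤ m + 1 := by
  have h2 : ‖Pch p y‖ ^ 2 ≤ m + 1 := by
    rw [EuclideanSpace.norm_sq_eq, Fin.sum_univ_succAbove _ p.1, Pch_same]
    have : ∀ j : Fin m, ‖Pch p y (p.1.succAbove j)‖ ^ 2 ≤ 1 := by
      intro j
      rw [Pch_succ]
      have h1 := hy.1 j; have h2 := hy.2 j
      simp at h1 h2
      rw [Real.norm_eq_abs, sq_abs]; nlinarith
    have := Finset.sum_le_sum (s := Finset.univ) (fun j _ => this j)
    simp only [Finset.sum_const, Finset.card_univ, Fintype.card_fin, nsmul_eq_mul, mul_one] at this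
    rw [Real.norm_eq_abs, sg_abs]; linarith
  have := Pch_norm_ge p y
  nlinarith

lemma Nch_norm {m : ℕ} (p : Fin (m+1) × Bool) (y : Fin m → ℝ) : ‖Nch p y‖ = 1 := by
  rw [Nch, norm_smul, norm_inv, norm_norm, inv_mul_cancel₀ (Pch_pos p y).ne']

lemma Pch_lip {m : ℕ} (p : Fin (m+1) × Bool) (y z : Fin m → ℝ) :
    ‖Pch p y - Pch p z‖ ≤ (m+1) * ‖y - z‖ := by
  have h2 : ‖Pch p y - Pch p z‖ ^ 2 ≤ ((m+1) * ‖y - z‖)^2 := by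
    rw [EuclideanSpace.norm_sq_eq, Fin.sum_univ_succAbove _ p.1]
    have : ∀ j : Fin m, ‖(Pch p y - Pch p z) (p.1.succAbove j)‖ ^ 2 ≤ ‖y - z‖^2 := by
      intro j
      rw [PiLp.sub_apply, Pch_succ, Pch_succ]
      gcongr
      exact norm_le_pi_norm (y - z) j
    have := Finset.sum_le_sum (s := Finset.univ) (fun j _ => this j)
    simp only [Finset.sum_const, Finset.card_univ, Fintype.card_fin, nsmul_eq_mul] at this
    rw [PiLp.sub_apply, Pch_same, Pch_same]
    simp only [sub_self, norm_zero]
    have h0 : (0:ℝ) ≤ m := by positivity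
    nlinarith [mul_nonneg h0 (sq_nonneg ‖y-z‖), mul_nonneg (mul_nonneg h0 h0) (sq_nonneg ‖y-z‖), sq_nonneg ‖y - z‖]
  exact le_of_sq_le_sq h2 (by positivity) 

lemma Pch_cont {m : ℕ} (p : Fin (m+1) × Bool) : Continuous (Pch p) := by
  have : LipschitzWith (m+1 : NNReal) (Pch p) := by
    refine LipschitzWith.of_dist_le_mul fun y z => ?_
    rw [dist_eq_norm, dist_eq_norm]
    exact_mod_cast Pch_lip p y z
  exact this.continuous

lemma Nch_lip {m : ℕ} (p : Fin (m+1) × Bool) : LipschitzWith (2 * (m+1) : NNReal) (Nch p) := by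
  refine LipschitzWith.of_dist_le_mul fun y z => ?_
  rw [dist_eq_norm, dist_eq_norm]
  refine (nrm_diff _ _ (Pch_ne p y) (Pch_ne p z)).trans ?_
  have h1 := Pch_lip p y z
  refine (div_le_self (by positivity) (Pch_norm_ge p z)).trans ?_
  push_cast
  linarith

def nuS (m : ℕ) : Measure (Euc (m+1)) :=
  (MeasureTheory.Measure.hausdorffMeasure (m : ℝ)).restrict (Metric.sphere 0 1)

lemma sphere_cover {m : ℕ} (θ : Euc (m+1)) (hθ : ‖θ‖ = 1) :
    ∃ p : Fin (m+1) × Bool, ∃ y ∈ Icc (-1 : Fin m → ℝ) 1, Nch p y = θ := by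
  obtain ⟨i, -, hi⟩ := Finset.exists_max_image (Finset.univ : Finset (Fin (m+1))) (fun j => |θ j|) ⟨0, Finset.mem_univ _⟩
  have hne : θ ≠ 0 := by rintro rfl; simp at hθ
  have hpos : 0 < |θ i| := by
    by_contra h
    apply hne
    ext j
    have := hi j (Finset.mem_univ _)
    have h1 : |θ j| ≤ 0 := this.trans (not_lt.1 h)
    simpa using h1
  obtain ⟨b, hb⟩ : ∃ b, θ i = |θ i| * sg b := by
    rcases le_total 0 (θ i) with h | h
    · exact ⟨true, by simp [sg, abs_of_nonneg h]⟩
    · exact ⟨false, by simp [sg, abs_of_nonpos h]⟩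
  refine ⟨(i, b), fun j => |θ i|⁻¹ * θ (i.succAbove j), ?_, ?_⟩
  · have : ∀ j, |(|θ i|⁻¹ * θ (i.succAbove j))| ≤ 1 := by
      intro j
      rw [abs_mul, abs_inv, abs_abs, inv_mul_le_iff₀ hpos, mul_one]
      exact hi _ (Finset.mem_univ _)
    exact ⟨fun j => (abs_le.1 (this j)).1, fun j => (abs_le.1 (this j)).2⟩
  · have hP : Pch (i, b) (fun j => |θ i|⁻¹ * θ (i.succAbove j)) = |θ i|⁻¹ • θ := by
      ext k
      rcases Fin.eq_self_or_eq_succAbove i k with rfl | ⟨j, rfl⟩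
      · rw [Pch_same (k, b), PiLp.smul_apply, smul_eq_mul]
        conv_rhs => rw [hb]
        rw [abs_mul, sg_abs, abs_abs]; field_simp
      · rw [Pch_succ (i, b)]; simp
    rw [Nch, hP, norm_smul, hθ]
    simp only [norm_inv, Real.norm_eq_abs, abs_abs, mul_one, inv_inv, smul_smul]
    rw [mul_inv_cancel₀ hpos.ne', one_smul]

lemma nuS_le (m : ℕ) (g : Euc (m+1) → ℝ≥0∞) (hg : Measurable g) :
    ∫⁻ θ, g θ ∂(nuS m) ≤ ENNReal.ofReal ((2 * (m + 1)) ^ m) *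
      ∑ p : Fin (m+1) × Bool, ∫⁻ y in Icc (-1 : Fin m → ℝ) 1, g (Nch p y) := by
  have key : nuS m ≤ ENNReal.ofReal ((2 * (m + 1)) ^ m) • 
      Measure.sum fun p : Fin (m+1) × Bool => (volume.restrict (Icc (-1 : Fin m → ℝ) 1)).map (Nch p) := by
    refine Measure.le_iff.2 fun E hE => ?_
    rw [nuS, Measure.restrict_apply hE, Measure.smul_apply, Measure.sum_apply _ hE, tsum_fintype, smul_eq_mul, Finset.mul_sum]
    have hsub : E ∩ Metric.sphere 0 1 ⊆ ⋃ p : Fin (m+1) × Bool, Nch p '' (Nch p ⁻¹' E ∩ Icc (-1) 1) := by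
      rintro θ ⟨h1, h2⟩
      obtain ⟨p, y, hy, rfl⟩ := sphere_cover θ (by simpa using h2)
      exact mem_iUnion.2 ⟨p, y, ⟨h1, hy⟩, rfl⟩
    refine (measure_mono hsub).trans ((measure_iUnion_le _).trans ?_)
    rw [tsum_fintype]
    refine Finset.sum_le_sum fun p _ => ?_
    have := ((Nch_lip p).lipschitzOnWith (s := Nch p ⁻¹' E ∩ Icc (-1) 1)).hausdorffMeasure_image_le (d := (m:ℝ)) (by positivity)
    refine this.trans ?_
    rw [Measure.map_apply (Nch_lip p).continuous.measurable hE, Measure.restrict_apply ((Nch_lip p).continuous.measurable hE)]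
    have hv := hausdorffMeasure_pi_real (ι := Fin m)
    rw [Fintype.card_fin] at hv
    rw [hv]
    gcongr
    rw [ENNReal.ofReal, ENNReal.rpow_natCast, ← ENNReal.coe_pow]
    gcongr
    rw [← NNReal.coe_le_coe, Real.coe_toNNReal _ (by positivity)]
    push_cast
    rfl
  refine (lintegral_mono' key le_rfl).trans ?_
  rw [lintegral_smul_measure, lintegral_sum_measure, tsum_fintype, smul_eq_mul]
  gcongr with p
  rw [lintegral_map hg (Nch_lip p).continuous.measurable]

lemma nuS_finite (m : ℕ) : IsFiniteMeasure (nuS m) := by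
  constructor
  rw [← lintegral_one]
  refine (nuS_le m _ measurable_const).trans_lt ?_
  refine ENNReal.mul_lt_top ENNReal.ofReal_lt_top ?_
  refine ENNReal.sum_lt_top.2 fun p _ => ?_
  simp only [lintegral_const, one_mul, Measure.restrict_apply_univ]
  exact isCompact_Icc.measure_lt_top


lemma Nch_inv {m : ℕ} (p : Fin (m+1) × Bool) (y z : Fin m → ℝ) (hy : y ∈ Icc (-1) 1)
    (hz : z ∈ Icc (-1) 1) : ‖y - z‖ ≤ 2 * (m+1)^2 * ‖Nch p y - Nch p z‖ := by
  set a := ‖Pch p y‖ with ha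
  set b := ‖Pch p z‖ with hb
  have ha0 : 0 < a := Pch_pos p y
  have hb0 : 0 < b := Pch_pos p z
  have ha1 : a ≤ m + 1 := Pch_norm_le p y hy
  have hb1 : b ≤ m + 1 := Pch_norm_le p z hz
  have hPy : Pch p y = a • Nch p y := by
    rw [Nch, smul_smul, mul_inv_cancel₀ ha0.ne', one_smul]
  have hPz : Pch p z = b • Nch p z := by
    rw [Nch, smul_smul, mul_inv_cancel₀ hb0.ne', one_smul]
  set d := ‖Nch p y - Nch p z‖ with hd
  have hd0 : 0 ≤ d := norm_nonneg _
  have e1 : a * Nch p y p.1 = sg p.2 := by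
    rw [← Pch_same p y]; conv_rhs => rw [hPy]
    rfl
  have e2 : b * Nch p z p.1 = sg p.2 := by
    rw [← Pch_same p z]; conv_rhs => rw [hPz]
    rfl
  have hcomp : |Nch p y p.1 - Nch p z p.1| ≤ d := PiLp.norm_apply_le (Nch p y - Nch p z) p.1
  have hab : |a - b| ≤ a * b * d := by
    have h1 : (a - b) * sg p.2 = - (a * b) * (Nch p y p.1 - Nch p z p.1) := by
      linear_combination (-a) * e2 + b * e1
    have h2 : |a - b| = a * b * |Nch p y p.1 - Nch p z p.1| := by
      have := congrArg abs h1
      rw [abs_mul, sg_abs, mul_one, abs_mul, abs_neg, abs_of_pos (mul_pos ha0 hb0)] at this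
      exact this
    rw [h2]; gcongr
  have h3 : ‖Pch p y - Pch p z‖ ≤ a * d + a * b * d := by
    have : Pch p y - Pch p z = a • (Nch p y - Nch p z) + (a - b) • Nch p z := by
      rw [hPy, hPz, smul_sub, sub_smul]; abel
    rw [this]
    refine (norm_add_le _ _).trans ?_
    rw [norm_smul, norm_smul, Nch_norm, mul_one, Real.norm_eq_abs, Real.norm_eq_abs, abs_of_pos ha0]
    linarith
  have h4 : ‖y - z‖ ≤ ‖Pch p y - Pch p z‖ := by
    refine (pi_norm_le_iff_of_nonneg (norm_nonneg _)).2 fun j => ?_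
    have := PiLp.norm_apply_le (Pch p y - Pch p z) (p.1.succAbove j)
    rwa [PiLp.sub_apply, Pch_succ, Pch_succ] at this
  have hm : (0:ℝ) ≤ m := by positivity
  have h5 : a * b ≤ (m+1)*(m+1) := by gcongr
  have h6 : a ≤ (m+1)*(m+1) := by nlinarith
  have h7 : a * d ≤ (m+1)*(m+1) * d := by gcongr
  have h8 : a * b * d ≤ (m+1)*(m+1) * d := by gcongr
  nlinarith

lemma ball_rpow_fin (m : ℕ) (hm : 1 ≤ m) (a : ℝ) (ha : a < m) :
    ∫⁻ z in Metric.ball (0 : Fin m → ℝ) 3, ‖z‖ₑ ^ (-a) < ∞ := by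
  have : Nonempty (Fin m) := ⟨⟨0, hm⟩⟩
  have h1 : IntegrableOn (fun x : Fin m → ℝ => ‖x‖ ^ (-a)) (Metric.ball 0 3) := by
    rw [integrableOn_fun_norm_addHaar volume (f := fun t : ℝ => t ^ (-a))]
    have h2 : IntegrableOn (fun t : ℝ => t ^ ((m:ℝ) - 1 - a)) (Ioo 0 3) := by
      rw [intervalIntegral.integrableOn_Ioo_rpow_iff (by norm_num)]; linarith
    refine h2.congr_fun ?_ measurableSet_Ioo
    intro t ht
    have ht0 : 0 < t := ht.1
    simp only [Module.finrank_fin_fun, smul_eq_mul]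
    rw [← Real.rpow_natCast, ← Real.rpow_add ht0]
    congr 1
    push_cast [hm]; ring
  have h2 := h1.2
  rw [HasFiniteIntegral] at h2
  refine lt_of_le_of_lt (le_of_eq ?_) h2
  refine lintegral_congr_ae ?_
  have h3 : ∀ᵐ z : Fin m → ℝ, z ≠ 0 := by
    simp [ae_iff]
  filter_upwards [ae_restrict_of_ae h3] with z hz
  have hz' : 0 < ‖z‖ := norm_pos_iff.2 hz
  rw [Real.enorm_eq_ofReal (by positivity), ← ofReal_norm, ENNReal.ofReal_rpow_of_pos hz']

lemma cap_bound (m : ℕ) (hm : 1 ≤ m) (a : ℝ) (ha0 : 0 ≤ a) (ha : a < m) :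
    ∃ C : ℝ≥0∞, C < ∞ ∧ ∀ ω : Euc (m+1), ∫⁻ θ, ‖θ - ω‖ₑ ^ (-a) ∂(nuS m) ≤ C := by
  set B := ∫⁻ z in Metric.ball (0 : Fin m → ℝ) 3, ‖z‖ₑ ^ (-a) with hB
  set L : ℝ := 4 * (m+1)^2 with hL
  have hL0 : 0 < L := by positivity
  refine ⟨ENNReal.ofReal ((2 * (m + 1)) ^ m) * ∑ p : Fin (m+1) × Bool, (ENNReal.ofReal L)^a * B, ?_, ?_⟩
  · refine ENNReal.mul_lt_top ENNReal.ofReal_lt_top (ENNReal.sum_lt_top.2 fun p _ => ?_)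
    exact ENNReal.mul_lt_top (ENNReal.rpow_lt_top_of_nonneg ha0 ENNReal.ofReal_ne_top) (ball_rpow_fin m hm a ha)
  intro ω
  refine (nuS_le m _ (by fun_prop)).trans ?_
  gcongr with p
  obtain ⟨y0, hy0, hmin⟩ := (isCompact_Icc (a := (-1 : Fin m → ℝ)) (b := 1)).exists_isMinOn
    ⟨0, by constructor <;> intro j <;> simp⟩
    (f := fun y => ‖Nch p y - ω‖) (((Nch_lip p).continuous.sub continuous_const).norm.continuousOn)
  have hpt : ∀ y ∈ Icc (-1 : Fin m → ℝ) 1, ‖Nch p y - ω‖ₑ ^ (-a) ≤ (ENNReal.ofReal L)^a * ‖y - y0‖ₑ ^ (-a) := by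
    intro y hy
    have h1 := Nch_inv p y y0 hy hy0
    have h2 : ‖Nch p y0 - ω‖ ≤ ‖Nch p y - ω‖ := hmin hy
    have h3 : ‖Nch p y - Nch p y0‖ ≤ 2 * ‖Nch p y - ω‖ := by
      have := norm_sub_le (Nch p y - ω) (Nch p y0 - ω)
      rw [sub_sub_sub_cancel_right] at this
      linarith
    have h4 : ‖y - y0‖ ≤ L * ‖Nch p y - ω‖ := by
      refine h1.trans ?_
      rw [hL]
      have : (0:ℝ) ≤ 2 * (m+1)^2 := by positivity
      nlinarith
    have h5 : ‖y - y0‖ₑ ≤ ENNReal.ofReal L * ‖Nch p y - ω‖ₑ := by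
      rw [← ofReal_norm, ← ofReal_norm, ← ENNReal.ofReal_mul hL0.le]
      exact ENNReal.ofReal_le_ofReal h4
    rw [ENNReal.rpow_neg, ENNReal.rpow_neg, ← div_eq_mul_inv, ← one_div]
    rw [ENNReal.le_div_iff_mul_le]
    · rw [one_div, mul_comm, ← div_eq_mul_inv]
      refine ENNReal.div_le_of_le_mul ?_
      rw [← ENNReal.mul_rpow_of_nonneg _ _ ha0]
      exact ENNReal.rpow_le_rpow h5 ha0
    · right
      exact (ENNReal.rpow_pos (by simpa using hL0) ENNReal.ofReal_ne_top).ne'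
    · left
      exact (ENNReal.rpow_lt_top_of_nonneg ha0 enorm_ne_top).ne
  calc ∫⁻ y in Icc (-1 : Fin m → ℝ) 1, ‖Nch p y - ω‖ₑ ^ (-a) 
      ≤ ∫⁻ y in Icc (-1 : Fin m → ℝ) 1, (ENNReal.ofReal L)^a * ‖y - y0‖ₑ ^ (-a) :=
        setLIntegral_mono' measurableSet_Icc hpt
    _ = (ENNReal.ofReal L)^a * ∫⁻ y in Icc (-1 : Fin m → ℝ) 1, ‖y - y0‖ₑ ^ (-a) :=
        lintegral_const_mul _ (by fun_prop)
    _ ≤ (ENNReal.ofReal L)^a * B := by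
        gcongr
        rw [hB, ← lintegral_indicator measurableSet_Icc, ← lintegral_indicator Metric.isOpen_ball.measurableSet]
        rw [← lintegral_sub_right_eq_self (μ := volume) ((Metric.ball (0 : Fin m → ℝ) 3).indicator _) y0]
        refine lintegral_mono fun y => ?_
        by_cases hy : y ∈ Icc (-1 : Fin m → ℝ) 1
        · rw [indicator_of_mem hy, indicator_of_mem]
          rw [mem_ball_zero_iff]
          refine lt_of_le_of_lt ((pi_norm_le_iff_of_nonneg (r := 2) (by norm_num)).2 fun j => ?_) (by norm_num)
          have a1 := hy.1 j; have a2 := hy.2 j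
          have a3 := hy0.1 j; have a4 := hy0.2 j
          simp at a1 a2 a3 a4
          rw [Pi.sub_apply, Real.norm_eq_abs, abs_le]; constructor <;> linarith
        · rw [indicator_of_notMem hy]; exact bot_le


lemma ftc_bound (φ φ' : ℝ → ℝ) (hφ : ∀ s, HasDerivAt φ (φ' s) s) (hc : Continuous φ')
    (hlim : Tendsto φ atTop (nhds 0)) (s0 : ℝ) :
    ENNReal.ofReal (φ s0) ≤ ∫⁻ s in Ioi s0, ‖φ' s‖ₑ := by
  have h1 : Tendsto (fun R => ENNReal.ofReal (φ s0 - φ R)) atTop (nhds (ENNReal.ofReal (φ s0 - 0))) :=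
    (ENNReal.continuous_ofReal.tendsto _).comp (tendsto_const_nhds.sub hlim)
  rw [sub_zero] at h1
  refine le_of_tendsto h1 ?_
  filter_upwards [eventually_ge_atTop s0] with R hR
  have h2 : ∫ s in s0..R, φ' s = φ R - φ s0 :=
    intervalIntegral.integral_eq_sub_of_hasDerivAt (fun s _ => hφ s) (hc.intervalIntegrable _ _)
  rw [intervalIntegral.integral_of_le hR] at h2
  calc ENNReal.ofReal (φ s0 - φ R) ≤ ‖φ s0 - φ R‖ₑ := by
        rw [Real.enorm_eq_ofReal_abs]; exact ENNReal.ofReal_le_ofReal (le_abs_self _)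
    _ = ‖∫ s in Ioc s0 R, φ' s‖ₑ := by rw [h2, ← enorm_neg, neg_sub]
    _ ≤ ∫⁻ s in Ioc s0 R, ‖φ' s‖ₑ := enorm_integral_le_lintegral_enorm _
    _ ≤ _ := lintegral_mono_set Ioc_subset_Ioi_self

lemma lintegral_smul_pi {m : ℕ} (g : (Fin m → ℝ) → ℝ≥0∞) (hg : Measurable g) (s : ℝ) (hs : 0 < s) :
    ENNReal.ofReal (s ^ m) * ∫⁻ y, g (s • y) = ∫⁻ x, g x := by
  have h1 : ∫⁻ y, g (s • y) = ∫⁻ x, g x ∂(Measure.map (s • ·) volume) :=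
    (lintegral_map hg (measurable_const_smul s)).symm
  rw [h1, Measure.map_addHaar_smul _ hs.ne', lintegral_smul_measure, smul_eq_mul, ← mul_assoc,
    ← ENNReal.ofReal_mul (by positivity), Module.finrank_fin_fun, abs_of_pos (by positivity),
    mul_inv_cancel₀ (by positivity), ENNReal.ofReal_one, one_mul]

lemma lintegral_split {m : ℕ} (i : Fin (m+1)) (g : Euc (m+1) → ℝ≥0∞) (hg : Measurable g) :
    ∫⁻ s : ℝ, ∫⁻ x : Fin m → ℝ, g (WithLp.toLp 2 (Fin.insertNth (α := fun _ => ℝ) i s x)) = ∫⁻ x, g x := by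
  have h1 := (PiLp.volume_preserving_toLp (Fin (m+1))).lintegral_comp hg
  rw [← h1]
  have hm : Measurable (fun x : Fin (m+1) → ℝ => g (WithLp.toLp 2 x)) :=
    hg.comp (PiLp.volume_preserving_toLp (Fin (m+1))).measurable
  have h2 := ((volume_preserving_piFinSuccAbove (fun _ : Fin (m+1) => ℝ) i).symm _).lintegral_comp hm
  rw [← h2]
  have h3 : Measurable fun a : ℝ × (Fin m → ℝ) => g (WithLp.toLp 2 ((MeasurableEquiv.piFinSuccAbove (fun _ : Fin (m+1) => ℝ) i).symm a)) :=
    hm.comp (MeasurableEquiv.measurable _)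
  exact (lintegral_prod _ h3.aemeasurable).symm

/-- H1 density -/
def Gd {n : ℕ} (F : SchwartzMap (Euc n) ℂ) (x : Euc n) : ℝ≥0∞ := ‖F x‖ₑ ^ 2 + ‖fderiv ℝ F x‖ₑ ^ 2

lemma Gd_meas {n : ℕ} (F : SchwartzMap (Euc n) ℂ) : Measurable (Gd F) := by
  have h1 : Continuous (fun x => F x) := F.continuous
  have h2 : Continuous (fderiv ℝ F) := (F.smooth 1).continuous_fderiv (by norm_num)
  unfold Gd
  exact ((h1.enorm.measurable.pow_const 2).add (h2.enorm.measurable.pow_const 2))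

lemma ray_bound {n : ℕ} (F : SchwartzMap (Euc n) ℂ) (c P : Euc n) (hP : P ≠ 0) (s0 : ℝ) :
    ‖F (c + s0 • P)‖ₑ ^ 2 ≤ ‖P‖ₑ * ∫⁻ s in Ioi s0, Gd F (c + s • P) := by
  have hd : ∀ s : ℝ, HasDerivAt (fun s : ℝ => F (c + s • P)) (fderiv ℝ F (c + s • P) P) s := by
    intro s
    have h1 : HasFDerivAt F (fderiv ℝ F (c + s • P)) (c + s • P) :=
      (F.differentiable _).hasFDerivAt
    have h2 : HasDerivAt (fun s : ℝ => c + s • P) P s := by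
      simpa using ((hasDerivAt_id s).smul_const P).const_add c
    exact h1.comp_hasDerivAt s h2
  have h2c : Continuous (fderiv ℝ F) := (F.smooth 1).continuous_fderiv (by norm_num)
  have hline : Continuous (fun s : ℝ => c + s • P) := by fun_prop
  have hφ : ∀ s, HasDerivAt (fun s : ℝ => ‖F (c + s • P)‖ ^ 2) (2 * inner ℝ (F (c + s • P)) (fderiv ℝ F (c + s • P) P)) s :=
    fun s => (hd s).norm_sq
  have hc : Continuous (fun s : ℝ => 2 * inner ℝ (F (c + s • P)) (fderiv ℝ F (c + s • P) P)) := by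
    have a1 : Continuous (fun s : ℝ => F (c + s • P)) := F.continuous.comp hline
    have a2 : Continuous (fun s : ℝ => fderiv ℝ F (c + s • P) P) := (h2c.comp hline).clm_apply continuous_const
    exact continuous_const.mul (a1.inner a2)
  have hlim : Tendsto (fun s : ℝ => ‖F (c + s • P)‖ ^ 2) atTop (nhds 0) := by
    have a1 : Tendsto (fun s : ℝ => c + s • P) atTop (cocompact _) := by
      rw [← Metric.cobounded_eq_cocompact, ← tendsto_norm_atTop_iff_cobounded]
      have : Tendsto (fun s : ℝ => s * ‖P‖ - ‖c‖) atTop atTop := 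
        tendsto_atTop_add_const_right _ _ (tendsto_id.atTop_mul_const (norm_pos_iff.2 hP))
      refine tendsto_atTop_mono (fun s => ?_) this
      have := norm_sub_norm_le (s • P) (-c)
      rw [norm_neg, sub_neg_eq_add, add_comm (s • P), norm_smul, Real.norm_eq_abs] at this
      nlinarith [le_abs_self s, norm_nonneg P]
    have a2 : Tendsto F (cocompact _) (nhds 0) := F.toZeroAtInfty.zero_at_infty'
    simpa using ((a2.comp a1).norm).pow 2
  have key := ftc_bound _ _ hφ hc hlim s0
  have e1 : ENNReal.ofReal (‖F (c + s0 • P)‖ ^ 2) = ‖F (c + s0 • P)‖ₑ ^ 2 := by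
    rw [ENNReal.ofReal_pow (norm_nonneg _), ofReal_norm]
  rw [← e1]
  refine key.trans ?_
  have hmm : Measurable (fun s : ℝ => Gd F (c + s • P)) := (Gd_meas F).comp hline.measurable
  rw [← lintegral_const_mul _ hmm]
  refine lintegral_mono fun s => ?_
  set z := c + s • P
  have b1 : |2 * inner ℝ (F z) (fderiv ℝ F z P)| ≤ ‖P‖ * (‖F z‖ ^ 2 + ‖fderiv ℝ F z‖ ^ 2) := by
    rw [abs_mul, abs_two]
    have c1 := abs_real_inner_le_norm (F z) (fderiv ℝ F z P)
    have c2 := (fderiv ℝ F z).le_opNorm P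
    have c3 : ‖F z‖ * ‖fderiv ℝ F z P‖ ≤ ‖F z‖ * (‖fderiv ℝ F z‖ * ‖P‖) := by gcongr
    have c4 : 2 * (‖F z‖ * ‖fderiv ℝ F z‖) ≤ ‖F z‖ ^ 2 + ‖fderiv ℝ F z‖ ^ 2 := by
      nlinarith [sq_nonneg (‖F z‖ - ‖fderiv ℝ F z‖)]
    nlinarith [norm_nonneg P]
  simp only
  rw [Real.enorm_eq_ofReal_abs, Gd, ← ofReal_norm, ← ofReal_norm (F z), ← ofReal_norm (fderiv ℝ F z),
    ← ENNReal.ofReal_pow (norm_nonneg _), ← ENNReal.ofReal_pow (norm_nonneg _), 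
    ← ENNReal.ofReal_add (by positivity) (by positivity), ← ENNReal.ofReal_mul (norm_nonneg _)]
  exact ENNReal.ofReal_le_ofReal b1

lemma cone_int {m : ℕ} (p : Fin (m+1) × Bool) (c : Euc (m+1)) (G : Euc (m+1) → ℝ≥0∞) (hG : Measurable G) :
    ∫⁻ y : Fin m → ℝ, ∫⁻ s in Ioi (0:ℝ), ENNReal.ofReal (s ^ m) * G (c + s • Pch p y) ≤ ∫⁻ x, G x := by
  have hPm : Continuous (fun q : (Fin m → ℝ) × ℝ => c + q.2 • Pch p q.1) :=
    continuous_const.add (continuous_snd.smul ((Pch_cont p).comp continuous_fst))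
  rw [lintegral_lintegral_swap]
  swap
  · refine Measurable.aemeasurable ?_
    exact ((measurable_snd.pow_const m).ennreal_ofReal).mul (hG.comp hPm.measurable)
  have hins : ∀ t : ℝ, Continuous (fun x : Fin m → ℝ => (WithLp.toLp 2 (Fin.insertNth (α := fun _ => ℝ) p.1 t x) : Euc (m+1))) := by
    intro t
    refine (PiLp.continuous_toLp 2 _).comp ?_
    exact Continuous.finInsertNth _ continuous_const continuous_id
  have h1 : ∀ s ∈ Ioi (0:ℝ), ∫⁻ y : Fin m → ℝ, ENNReal.ofReal (s ^ m) * G (c + s • Pch p y)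
      = ∫⁻ x : Fin m → ℝ, G (c + WithLp.toLp 2 (Fin.insertNth (α := fun _ => ℝ) p.1 (sg p.2 * s) x)) := by
    intro s hs
    have hs' : 0 < s := hs
    have hmm : Measurable (fun y => G (c + s • Pch p y)) := hG.comp (continuous_const.add ((Pch_cont p).const_smul s)).measurable
    rw [lintegral_const_mul _ hmm]
    rw [← lintegral_smul_pi (fun x => G (c + WithLp.toLp 2 (Fin.insertNth (α := fun _ => ℝ) p.1 (sg p.2 * s) x)))
      (hG.comp (continuous_const.add (hins _)).measurable) s hs']
    congr 2
    ext y
    congr 2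
    ext k
    rcases Fin.eq_self_or_eq_succAbove p.1 k with rfl | ⟨j, rfl⟩
    · rw [PiLp.smul_apply, Pch_same]; simp [mul_comm]
    · rw [PiLp.smul_apply, Pch_succ]; simp
  rw [setLIntegral_congr_fun measurableSet_Ioi h1]
  refine (setLIntegral_le_lintegral _ _).trans ?_
  have h2 := lintegral_split p.1 (fun x => G (c + x)) (hG.comp (measurable_const_add c))
  have h3 : ∫⁻ s : ℝ, ∫⁻ x : Fin m → ℝ, G (c + WithLp.toLp 2 (Fin.insertNth (α := fun _ => ℝ) p.1 (sg p.2 * s) x))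
     = ∫⁻ s : ℝ, ∫⁻ x : Fin m → ℝ, G (c + WithLp.toLp 2 (Fin.insertNth (α := fun _ => ℝ) p.1 s x)) := by
    rcases p with ⟨i, b⟩
    cases b
    · simp only [sg, Bool.false_eq_true, if_false, neg_one_mul]
      exact lintegral_neg_eq_self (μ := (volume : Measure ℝ)) (fun s => ∫⁻ x : Fin m → ℝ, G (c + WithLp.toLp 2 (Fin.insertNth (α := fun _ => ℝ) i s x)))
    · simp [sg]
  rw [h3, h2, lintegral_add_left_eq_self]

lemma chart_trace {m : ℕ} (p : Fin (m+1) × Bool) (F : SchwartzMap (Euc (m+1)) ℂ) (c : Euc (m+1)) (ρ : ℝ) (hρ : 0 < ρ) :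
    ENNReal.ofReal (ρ ^ m) * ∫⁻ y in Icc (-1 : Fin m → ℝ) 1, ‖F (c + ρ • Nch p y)‖ₑ ^ 2
      ≤ ENNReal.ofReal ((m+1) ^ (m+1)) * ∫⁻ x, Gd F x := by
  have hcont : Continuous (fun y => F (c + ρ • Nch p y)) :=
    F.continuous.comp (continuous_const.add ((Nch_lip p).continuous.const_smul ρ))
  rw [← lintegral_const_mul _ (hcont.enorm.measurable.pow_const 2)]
  have hpt : ∀ y ∈ Icc (-1 : Fin m → ℝ) 1, ENNReal.ofReal (ρ ^ m) * ‖F (c + ρ • Nch p y)‖ₑ ^ 2 ≤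
     ENNReal.ofReal ((m+1) ^ (m+1)) * ∫⁻ s in Ioi (0:ℝ), ENNReal.ofReal (s ^ m) * Gd F (c + s • Pch p y) := by
    intro y hy
    have hp0 := Pch_pos p y
    have hp1 := Pch_norm_le p y hy
    set s0 := ρ * ‖Pch p y‖⁻¹ with hs0
    have hs00 : 0 < s0 := by positivity
    have hρs : ρ = s0 * ‖Pch p y‖ := by rw [hs0]; field_simp
    have e1 : c + ρ • Nch p y = c + s0 • Pch p y := by rw [Nch, smul_smul]
    rw [e1]
    have hmeas : Measurable (fun s : ℝ => Gd F (c + s • Pch p y)) :=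
      (Gd_meas F).comp (by fun_prop)
    calc ENNReal.ofReal (ρ ^ m) * ‖F (c + s0 • Pch p y)‖ₑ ^ 2
        ≤ ENNReal.ofReal (ρ ^ m) * (‖Pch p y‖ₑ * ∫⁻ s in Ioi s0, Gd F (c + s • Pch p y)) := by
          gcongr; exact ray_bound F c _ (Pch_ne p y) s0
      _ = ENNReal.ofReal (‖Pch p y‖ ^ (m+1)) * ∫⁻ s in Ioi s0, ENNReal.ofReal (s0 ^ m) * Gd F (c + s • Pch p y) := by
          rw [lintegral_const_mul _ hmeas, ← mul_assoc, ← mul_assoc, ← ofReal_norm, 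
            ← ENNReal.ofReal_mul (by positivity), ← ENNReal.ofReal_mul (by positivity)]
          congr 2
          rw [hρs, mul_pow, pow_succ]
          have : s0 * ‖Pch p y‖ * ‖Pch p y‖⁻¹ = s0 := by field_simp
          ring
      _ ≤ ENNReal.ofReal ((m+1) ^ (m+1)) * ∫⁻ s in Ioi s0, ENNReal.ofReal (s ^ m) * Gd F (c + s • Pch p y) := by
          refine mul_le_mul' (ENNReal.ofReal_le_ofReal (by gcongr)) ?_
          refine setLIntegral_mono' measurableSet_Ioi fun s hs => ?_
          have : s0 < s := hs
          gcongr
      _ ≤ _ := by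
          gcongr
  refine (setLIntegral_mono' measurableSet_Icc hpt).trans ?_
  refine (setLIntegral_le_lintegral _ _).trans ?_
  rw [lintegral_const_mul']
  · gcongr
    exact cone_int p c _ (Gd_meas F)
  · exact ENNReal.ofReal_ne_top

lemma trace_bound (m : ℕ) : ∃ C : ℝ≥0∞, C < ∞ ∧ ∀ (F : SchwartzMap (Euc (m+1)) ℂ) (c : Euc (m+1)) (ρ : ℝ), 0 < ρ →
    ENNReal.ofReal (ρ ^ m) * ∫⁻ θ, ‖F (c + ρ • θ)‖ₑ ^ 2 ∂(nuS m) ≤ C * ∫⁻ x, Gd F x := by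
  refine ⟨ENNReal.ofReal ((2 * (m + 1)) ^ m) * ∑ p : Fin (m+1) × Bool, ENNReal.ofReal ((m+1) ^ (m+1)), ?_, ?_⟩
  · refine ENNReal.mul_lt_top ENNReal.ofReal_lt_top (ENNReal.sum_lt_top.2 fun p _ => ENNReal.ofReal_lt_top)
  intro F c ρ hρ
  have hcont : Continuous (fun θ => F (c + ρ • θ)) :=
    F.continuous.comp (by fun_prop)
  have h1 := nuS_le m _ (hcont.enorm.measurable.pow_const 2)
  calc _ ≤ ENNReal.ofReal (ρ ^ m) * (ENNReal.ofReal ((2 * (m + 1)) ^ m) *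
      ∑ p : Fin (m+1) × Bool, ∫⁻ y in Icc (-1 : Fin m → ℝ) 1, ‖F (c + ρ • Nch p y)‖ₑ ^ 2) := by gcongr
    _ = ENNReal.ofReal ((2 * (m + 1)) ^ m) * ∑ p : Fin (m+1) × Bool, 
        ENNReal.ofReal (ρ ^ m) * ∫⁻ y in Icc (-1 : Fin m → ℝ) 1, ‖F (c + ρ • Nch p y)‖ₑ ^ 2 := by
        rw [← Finset.mul_sum]; ring
    _ ≤ ENNReal.ofReal ((2 * (m + 1)) ^ m) * ∑ p : Fin (m+1) × Bool, 
        ENNReal.ofReal ((m+1) ^ (m+1)) * ∫⁻ x, Gd F x := by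
        refine mul_le_mul' le_rfl (Finset.sum_le_sum fun p _ => ?_)
        exact chart_trace p F c ρ hρ
    _ = _ := by rw [← Finset.sum_mul, mul_assoc]


lemma ewald_le (m : ℕ) (r : ℝ) (hr : 0 < r) (η : Euc (m+1)) (hη : η ≠ 0) (g : Euc (m+1) → ℝ≥0∞) (hg : Measurable g) :
    ∫⁻ ξ, g ξ ∂(ewaldM (m+1) r η) ≤ ENNReal.ofReal ((r * ‖η‖ / 2) ^ m) *
      ∫⁻ θ, g ((2 : ℝ)⁻¹ • η + (r * ‖η‖ / 2) • θ) ∂(nuS m) := by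
  set ρ := r * ‖η‖ / 2 with hρ
  set c := (2 : ℝ)⁻¹ • η with hc
  have hρ0 : 0 < ρ := by have := norm_pos_iff.2 hη; positivity
  have hφm : Measurable (fun θ : Euc (m+1) => c + ρ • θ) := by fun_prop
  have hlip : LipschitzWith ⟨ρ, hρ0.le⟩ (fun θ : Euc (m+1) => c + ρ • θ) := by
    refine LipschitzWith.of_dist_le_mul fun y z => ?_
    rw [dist_add_left, dist_smul₀, Real.norm_eq_abs, abs_of_pos hρ0]; rfl
  have key : ewaldM (m+1) r η ≤ ENNReal.ofReal (ρ ^ m) • (nuS m).map (fun θ : Euc (m+1) => c + ρ • θ) := by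
    refine Measure.le_iff.2 fun E hE => ?_
    have hcast : (((m+1 : ℕ) : ℝ) - 1) = m := by push_cast; ring
    rw [ewaldM, hcast, Measure.restrict_apply hE, Measure.smul_apply, Measure.map_apply hφm hE, nuS,
      Measure.restrict_apply (hφm hE), smul_eq_mul]
    have hsub : E ∩ Metric.sphere c ρ ⊆ (fun θ : Euc (m+1) => c + ρ • θ) '' ((fun θ : Euc (m+1) => c + ρ • θ) ⁻¹' E ∩ Metric.sphere 0 1) := by
      rintro ξ ⟨h1, h2⟩
      have e : c + ρ • (ρ⁻¹ • (ξ - c)) = ξ := by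
        rw [smul_smul, mul_inv_cancel₀ hρ0.ne', one_smul]; abel
      refine ⟨ρ⁻¹ • (ξ - c), ⟨?_, ?_⟩, e⟩
      · rw [mem_preimage, e]; exact h1
      · rw [mem_sphere_zero_iff_norm, norm_smul, norm_inv, Real.norm_eq_abs, abs_of_pos hρ0, 
          mem_sphere_iff_norm.1 h2, inv_mul_cancel₀ hρ0.ne']
    refine (measure_mono hsub).trans ?_
    refine ((hlip.lipschitzOnWith).hausdorffMeasure_image_le (d := (m:ℝ)) (by positivity)).trans ?_
    gcongr
    rw [ENNReal.rpow_natCast, ENNReal.ofReal_pow hρ0.le, ENNReal.ofReal_eq_coe_nnreal hρ0.le]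
    rfl
  refine (lintegral_mono' key le_rfl).trans ?_
  rw [lintegral_smul_measure, smul_eq_mul, lintegral_map hg hφm]

lemma T_inj_aux {n : ℕ} (r : ℝ) (hr : 0 < r) (θ x y : Euc n) (hθ : ‖θ‖ = 1) (hx : ⟪θ, x⟫ ≤ 0) (hy : ⟪θ, y⟫ ≤ 0)
    (h : x - (r * ‖x‖) • θ = y - (r * ‖y‖) • θ) : ‖x‖ ≤ ‖y‖ := by
  by_contra hlt
  push Not at hlt
  set k := r * (‖x‖ - ‖y‖) with hk
  have hk0 : 0 < k := mul_pos hr (sub_pos.2 hlt)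
  have e : x = y + k • θ := by
    have : k • θ = (r * ‖x‖) • θ - (r * ‖y‖) • θ := by rw [← sub_smul, hk]; ring_nf
    rw [this]; rw [sub_eq_sub_iff_add_eq_add] at h
    rw [← add_sub_assoc, eq_sub_iff_add_eq]; exact h
  have e1 : ⟪θ, x⟫ = ⟪θ, y⟫ + k := by
    rw [e, inner_add_right, inner_smul_right, real_inner_self_eq_norm_sq, hθ]; ring
  have e2 : ‖x‖ ^ 2 = ‖y‖ ^ 2 + 2 * (k * ⟪θ, y⟫) + k ^ 2 := by
    rw [e, norm_add_sq_real, inner_smul_right, norm_smul, hθ, real_inner_comm, Real.norm_eq_abs, mul_one, sq_abs]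
  have : ‖x‖ ^ 2 ≤ ‖y‖ ^ 2 := by nlinarith
  have := abs_le_abs_of_sq_le_sq this
  simp at this
  linarith
where abs_le_abs_of_sq_le_sq {a b : ℝ} (h : a ^ 2 ≤ b ^ 2) : |a| ≤ |b| := sq_le_sq.1 h

lemma cov_bound {n : ℕ} (r : ℝ) (hr : 0 < r) (θ : Euc n) (hθ : ‖θ‖ = 1) (g : Euc n → ℝ≥0∞) :
    ∫⁻ η in {η : Euc n | η ≠ 0 ∧ ⟪θ, η⟫ ≤ 0}, g ((2:ℝ)⁻¹ • (η - (r * ‖η‖) • θ)) ≤ 2 ^ n * ∫⁻ u, g u := by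
  set S := {η : Euc n | η ≠ 0 ∧ ⟪θ, η⟫ ≤ 0} with hS
  have hSm : MeasurableSet S := by
    refine MeasurableSet.inter (measurableSet_singleton _).compl ?_
    have hc : Continuous (fun η : Euc n => ⟪θ, η⟫) := by fun_prop
    exact (isClosed_le hc continuous_const).measurableSet
  set T : Euc n → Euc n := fun η => (2:ℝ)⁻¹ • (η - (r * ‖η‖) • θ) with hT
  set T' : Euc n → Euc n →L[ℝ] Euc n := fun η => 
    (2:ℝ)⁻¹ • (ContinuousLinearMap.id ℝ (Euc n) - (r • (‖η‖⁻¹ • innerSL ℝ η)).smulRight θ) with hT'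
  have hd : ∀ x ∈ S, HasFDerivWithinAt T (T' x) S x := by
    intro x hx
    have hx0 : 0 < ‖x‖ := norm_pos_iff.2 hx.1
    have h1 : HasFDerivAt (fun y : Euc n => ‖y‖) (‖x‖⁻¹ • innerSL ℝ x) x := by
      have h0 := ((hasStrictFDerivAt_norm_sq x).hasFDerivAt).sqrt (by positivity)
      have e : (fun y : Euc n => √(‖y‖ ^ 2)) = fun y => ‖y‖ := by ext y; exact Real.sqrt_sq (norm_nonneg _)
      rw [e] at h0
      have e2 : (1 / (2 * √(‖x‖ ^ 2))) • (2 • innerSL ℝ x) = ‖x‖⁻¹ • innerSL ℝ x := by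
        rw [Real.sqrt_sq hx0.le]
        ext z
        simp
        field_simp
      rw [e2] at h0
      exact h0
    have h2 := ((hasFDerivAt_id (𝕜 := ℝ) x).sub ((h1.const_mul r).smul_const θ)).const_smul ((2:ℝ)⁻¹)
    exact h2.hasFDerivWithinAt
  have hinj : InjOn T S := by
    intro x hx y hy hxy
    have h : x - (r * ‖x‖) • θ = y - (r * ‖y‖) • θ := smul_right_injective _ (by norm_num : (2:ℝ)⁻¹ ≠ 0) hxy
    have e : ‖x‖ = ‖y‖ := le_antisymm (T_inj_aux r hr θ x y hθ hx.2 hy.2 h) (T_inj_aux r hr θ y x hθ hy.2 hx.2 h.symm)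
    rw [e] at h
    exact sub_left_injective h
  have hdet : ∀ x ∈ S, (2:ℝ)⁻¹ ^ n ≤ |(T' x).det| := by
    intro x hx
    have e : ((T' x : Euc n →L[ℝ] Euc n) : Euc n →ₗ[ℝ] Euc n) = (2:ℝ)⁻¹ • LinearMap.transvection
        (-(r * ‖x‖⁻¹) • ((innerSL ℝ x : Euc n →L[ℝ] ℝ) : Euc n →ₗ[ℝ] ℝ)) θ := by
      ext z
      simp [hT', LinearMap.transvection.apply, sub_eq_add_neg, mul_assoc]
    rw [ContinuousLinearMap.det, e, LinearMap.det_smul, LinearMap.transvection.det, finrank_euclideanSpace_fin]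
    have hp : 0 ≤ (-(r * ‖x‖⁻¹) • ((innerSL ℝ x : Euc n →L[ℝ] ℝ) : Euc n →ₗ[ℝ] ℝ)) θ := by
      have := hx.2
      rw [real_inner_comm] at this
      simp only [LinearMap.smul_apply, ContinuousLinearMap.coe_coe, innerSL_apply_apply, smul_eq_mul]
      have h3 : 0 ≤ r * ‖x‖⁻¹ := by positivity
      nlinarith
    rw [abs_of_nonneg (by positivity)]
    refine le_mul_of_one_le_right (by positivity) (by linarith)
  have key := lintegral_image_eq_lintegral_abs_det_fderiv_mul volume hSm hd hinj g
  calc ∫⁻ η in S, g (T η) ≤ ∫⁻ η in S, 2 ^ n * (ENNReal.ofReal |(T' η).det| * g (T η)) := by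
        refine setLIntegral_mono' hSm fun x hx => ?_
        rw [← mul_assoc]
        refine le_mul_of_one_le_left bot_le ?_
        have : (2:ℝ≥0∞) ^ n = ENNReal.ofReal (2 ^ n) := by rw [ENNReal.ofReal_pow (by norm_num)]; simp
        rw [this, ← ENNReal.ofReal_mul (by positivity), ← ENNReal.ofReal_one]
        refine ENNReal.ofReal_le_ofReal ?_
        have h1 := hdet x hx
        calc (1:ℝ) = 2 ^ n * 2⁻¹ ^ n := by rw [← mul_pow]; norm_num
          _ ≤ _ := by gcongr
    _ = 2 ^ n * ∫⁻ u in T '' S, g u := by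
        rw [lintegral_const_mul' _ _ (by finiteness), key]
    _ ≤ _ := by gcongr; exact Measure.restrict_le_self


lemma planch {n : ℕ} (h : SchwartzMap (Euc n) ℂ) : ∫⁻ x, ‖(𝓕 h : SchwartzMap (Euc n) ℂ) x‖ₑ ^ 2 = ∫⁻ x, ‖h x‖ₑ ^ 2 := by
  have conv : ∀ h : SchwartzMap (Euc n) ℂ, ∫⁻ x, ‖h x‖ₑ ^ 2 = ENNReal.ofReal (∫ x, ‖h x‖ ^ 2) := by
    intro h
    rw [ofReal_integral_eq_lintegral_ofReal]
    · congr 1; ext x; rw [ENNReal.ofReal_pow (norm_nonneg _), ofReal_norm]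
    · exact (h.memLp 2).integrable_norm_pow (by norm_num)
    · exact Eventually.of_forall fun x => by positivity
  rw [conv, conv, SchwartzMap.integral_norm_sq_fourier]

lemma ft_eq {n : ℕ} (f : SchwartzMap (Euc n) ℂ) (ξ : Euc n) :
    ft f ξ = (𝓕 f : SchwartzMap (Euc n) ℂ) ((2 * Real.pi)⁻¹ • ξ) := by
  rw [SchwartzMap.fourier_coe, Real.fourier_eq', ft]
  congr 1; ext x
  rw [smul_eq_mul]
  congr 2
  rw [inner_smul_right, real_inner_comm]
  have := Real.pi_pos.ne'
  push_cast
  field_simp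

lemma inv_eq {n : ℕ} (F : SchwartzMap (Euc n) ℂ) (x : Euc n) :
    ∫ ξ : Euc n, Complex.exp (Complex.I * ((⟪ξ, x⟫ : ℝ) : ℂ)) * F ξ
     = (𝓕⁻ F : SchwartzMap (Euc n) ℂ) ((2 * Real.pi)⁻¹ • x) := by
  rw [SchwartzMap.fourierInv_coe, Real.fourierInv_eq']
  congr 1; ext ξ
  rw [smul_eq_mul]
  congr 2
  rw [inner_smul_right]
  have := Real.pi_pos.ne'
  push_cast
  field_simp

lemma fderiv_sq_le {n : ℕ} (L : Euc n →L[ℝ] ℂ) :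
    ‖L‖ₑ ^ 2 ≤ ∑ j, ‖L (EuclideanSpace.single j 1)‖ₑ ^ 2 := by
  have h0 : 0 ≤ ∑ j, ‖L (EuclideanSpace.single j 1)‖ ^ 2 := by positivity
  have h1 : ‖L‖ ≤ √(∑ j, ‖L (EuclideanSpace.single j 1)‖ ^ 2) := by
    refine L.opNorm_le_bound (by positivity) fun v => ?_
    have e : L v = ∑ j, v j • L (EuclideanSpace.single j 1) := by
      have : v = ∑ j, v j • EuclideanSpace.single j (1:ℝ) := by
        have := (EuclideanSpace.basisFun (Fin n) ℝ).sum_repr v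
        simpa using this.symm
      conv_lhs => rw [this]
      simp
    rw [e]
    refine (norm_sum_le _ _).trans ?_
    simp only [norm_smul]
    refine (Real.sum_mul_le_sqrt_mul_sqrt _ _ _).trans ?_
    rw [mul_comm, EuclideanSpace.norm_eq]
  have h2 : ‖L‖ ^ 2 ≤ ∑ j, ‖L (EuclideanSpace.single j 1)‖ ^ 2 := by
    calc ‖L‖ ^ 2 ≤ (√(∑ j, ‖L (EuclideanSpace.single j 1)‖ ^ 2)) ^ 2 := by gcongr
      _ = _ := Real.sq_sqrt h0
  have h3 := ENNReal.ofReal_le_ofReal h2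
  rw [ENNReal.ofReal_sum_of_nonneg (fun j _ => by positivity)] at h3
  simpa only [ENNReal.ofReal_pow (norm_nonneg _), ofReal_norm] using h3

lemma jap_rpow {n : ℕ} (x : Euc n) (β : ℝ) : jap x ^ β = (1 + ‖x‖ ^ 2) ^ (β / 2) := by
  rw [jap, Real.sqrt_eq_rpow, ← Real.rpow_mul (by positivity)]; congr 1; ring

lemma exists_F {n : ℕ} (β : ℝ) (f : SchwartzMap (Euc n) ℂ) : ∃ F : SchwartzMap (Euc n) ℂ,
    (∀ ξ, F ξ = ((jap ξ ^ β : ℝ) : ℂ) * ft f ξ) ∧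
    ∫⁻ x, Gd F x ≤ ENNReal.ofReal ((2 * Real.pi) ^ n) * (wSobNorm β 1 f) ^ 2 := by
  have hpi : (2 * Real.pi) ≠ 0 := by positivity
  set A : Euc n ≃L[ℝ] Euc n := ContinuousLinearEquiv.smulLeft (Units.mk0 ((2 * Real.pi)⁻¹) (inv_ne_zero hpi))
  set F : SchwartzMap (Euc n) ℂ := SchwartzMap.smulLeftCLM ℂ (fun x : Euc n => (1 + ‖x‖ ^ 2) ^ (β / 2))
    (SchwartzMap.compCLMOfContinuousLinearEquiv ℝ A (𝓕 f)) with hF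
  have hFx : ∀ ξ, F ξ = ((jap ξ ^ β : ℝ) : ℂ) * ft f ξ := by
    intro ξ
    rw [hF, SchwartzMap.smulLeftCLM_apply_apply (by fun_prop), ft_eq, jap_rpow, Complex.real_smul]
    rfl
  refine ⟨F, hFx, ?_⟩
  set g : SchwartzMap (Euc n) ℂ := 𝓕⁻ F with hg
  have hFg : F = 𝓕 g := by rw [hg]; simp
  have hbes : ∀ x, besselD β f x = (((2 * Real.pi) ^ n : ℝ)⁻¹ : ℝ) • g ((2 * Real.pi)⁻¹ • x) := by
    intro x
    rw [besselD, hg, ← inv_eq]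
    simp only [hFx]
  -- sobolev norm
  have hW : (wSobNorm β 1 f) ^ 2 = ENNReal.ofReal (((2 * Real.pi) ^ n)⁻¹) * ∫⁻ y, (‖g y‖ₑ ^ 2 + ∑ j, ‖(2 * Real.pi * y j : ℝ) • g y‖ₑ ^ 2) := by
    have e0 : (wSobNorm β 1 f) ^ 2 = ∫⁻ x : Euc n, ‖(jap x ^ (1:ℝ) : ℝ) • besselD β f x‖ₑ ^ 2 := by
      rw [wSobNorm, eLpNorm_eq_lintegral_rpow_enorm_toReal (by norm_num) (by norm_num)]
      rw [← ENNReal.rpow_natCast, ← ENNReal.rpow_mul]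
      norm_num
    rw [e0]
    have e1 : ∀ x : Euc n, ‖(jap x ^ (1:ℝ) : ℝ) • besselD β f x‖ₑ ^ 2 = 
       ENNReal.ofReal (((2 * Real.pi) ^ n)⁻¹) ^ 2 * (fun y : Euc n => (‖g y‖ₑ ^ 2 + ∑ j, ‖(2 * Real.pi * y j : ℝ) • g y‖ₑ ^ 2)) ((2 * Real.pi)⁻¹ • x) := by
      intro x
      rw [hbes]
      set y := (2 * Real.pi)⁻¹ • x with hy
      have hx : x = (2 * Real.pi) • y := by rw [hy, smul_smul, mul_inv_cancel₀ hpi, one_smul]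
      have e2 : (‖g y‖ₑ ^ 2 + ∑ j, ‖(2 * Real.pi * y j : ℝ) • g y‖ₑ ^ 2) = ENNReal.ofReal ((1 + ‖x‖^2) * ‖g y‖^2) := by
        simp only [← ofReal_norm, ← ENNReal.ofReal_pow (norm_nonneg _)]
        rw [← ENNReal.ofReal_sum_of_nonneg (fun j _ => by positivity), ← ENNReal.ofReal_add (by positivity) (by positivity)]
        congr 1
        simp only [norm_smul, mul_pow]
        rw [← Finset.sum_mul, hx, EuclideanSpace.norm_sq_eq]
        simp
        ring
      simp only [e2]
      rw [Real.rpow_one, enorm_smul, enorm_smul, mul_pow, mul_pow]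
      rw [← mul_assoc, mul_comm (‖jap x‖ₑ ^2), mul_assoc]
      congr 1
      · rw [Real.enorm_eq_ofReal (by positivity)]
      · rw [jap, ENNReal.ofReal_mul (by positivity), Real.enorm_eq_ofReal (Real.sqrt_nonneg _), ← ENNReal.ofReal_pow (Real.sqrt_nonneg _),
          ENNReal.ofReal_pow (norm_nonneg _), ofReal_norm, Real.sq_sqrt (by positivity)]
    simp only [e1]
    have hgm : Measurable (fun y : Euc n => (‖g y‖ₑ ^ 2 + ∑ j, ‖(2 * Real.pi * y j : ℝ) • g y‖ₑ ^ 2)) := by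
      have : Continuous (fun y => g y) := g.continuous
      fun_prop
    have hs := lintegral_map hgm (measurable_const_smul (α := Euc n) ((2 * Real.pi)⁻¹)) (μ := volume)
    have hmm : Measurable (fun x : Euc n => (fun y : Euc n => (‖g y‖ₑ ^ 2 + ∑ j, ‖(2 * Real.pi * y j : ℝ) • g y‖ₑ ^ 2)) ((2 * Real.pi)⁻¹ • x)) := hgm.comp (measurable_const_smul _)
    rw [lintegral_const_mul _ hmm, ← hs]
    have hms := Measure.map_addHaar_smul (volume : Measure (Euc n)) (inv_ne_zero hpi)
    rw [show (fun x : Euc n => (2 * Real.pi)⁻¹ • x) = ((2 * Real.pi)⁻¹ • ·) from rfl, hms, lintegral_smul_measure, smul_eq_mul, ← mul_assoc]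
    congr 1
    rw [← ENNReal.ofReal_pow (by positivity), ← ENNReal.ofReal_mul (by positivity)]
    congr 1
    have hpw : ((2 * Real.pi)⁻¹ ^ n)⁻¹ = (2 * Real.pi) ^ n := by rw [inv_pow, inv_inv]
    rw [finrank_euclideanSpace_fin, hpw, abs_of_pos (by positivity)]
    field_simp
  rw [hW, ← mul_assoc, ← ENNReal.ofReal_mul (by positivity), mul_inv_cancel₀ (by positivity), ENNReal.ofReal_one, one_mul]
  have hFc : Continuous (fun y => F y) := F.continuous
  have hgc : Continuous (fun y => g y) := g.continuous
  have hj : ∀ j : Fin n, ∫⁻ x, ‖fderiv ℝ F x (EuclideanSpace.single j 1)‖ₑ ^ 2 = ∫⁻ y, ‖(2 * Real.pi * y j : ℝ) • g y‖ₑ ^ 2 := by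
    intro j
    have h1 := SchwartzMap.lineDerivOp_fourier_eq g (EuclideanSpace.single j 1)
    rw [← hFg] at h1
    have h2 := planch (-(2 * Real.pi * Complex.I) • SchwartzMap.smulLeftCLM ℂ (inner ℝ · (EuclideanSpace.single j 1)) g)
    rw [← h1] at h2
    simp only [SchwartzMap.lineDerivOp_apply_eq_fderiv] at h2
    rw [h2]
    congr 1; ext y
    congr 1
    rw [smul_apply, SchwartzMap.smulLeftCLM_apply_apply (by fun_prop), enorm_smul, enorm_smul, enorm_smul]
    rw [← mul_assoc]
    congr 1
    rw [← ofReal_norm, ← ofReal_norm, ← ofReal_norm, ← ENNReal.ofReal_mul (norm_nonneg _)]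
    congr 1
    simp [EuclideanSpace.inner_single_right]
  unfold Gd
  rw [lintegral_add_left (by fun_prop), lintegral_add_left (by fun_prop)]
  have hFn : ∫⁻ x, ‖F x‖ₑ ^ 2 = ∫⁻ x, ‖g x‖ₑ ^ 2 := by rw [hFg]; exact planch g
  refine add_le_add hFn.le ?_
  calc ∫⁻ x, ‖fderiv ℝ F x‖ₑ ^ 2 ≤ ∫⁻ x, ∑ j, ‖fderiv ℝ F x (EuclideanSpace.single j 1)‖ₑ ^ 2 :=
        lintegral_mono fun x => fderiv_sq_le _
    _ = ∑ j, ∫⁻ x, ‖fderiv ℝ F x (EuclideanSpace.single j 1)‖ₑ ^ 2 := by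
        refine lintegral_finset_sum _ fun j _ => ?_
        have h2 : Continuous (fderiv ℝ F) := (F.smooth 1).continuous_fderiv (by norm_num)
        exact ((h2.clm_apply continuous_const).enorm.measurable.pow_const 2)
    _ = ∑ j, ∫⁻ y, ‖(2 * Real.pi * y j : ℝ) • g y‖ₑ ^ 2 := by simp only [hj]
    _ = ∫⁻ y, ∑ j, ‖(2 * Real.pi * y j : ℝ) • g y‖ₑ ^ 2 := by
        refine (lintegral_finset_sum _ fun j _ => ?_).symm
        fun_prop
    _ ≤ _ := le_rfl


lemma jap_one {n : ℕ} (x : Euc n) : 1 ≤ jap x := by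
  rw [jap]; exact Real.one_le_sqrt.2 (by nlinarith [norm_nonneg x])
lemma jap_norm {n : ℕ} (x : Euc n) : ‖x‖ ≤ jap x := by
  rw [jap]; exact Real.le_sqrt_of_sq_le (by linarith)
lemma jap_le {n : ℕ} (x : Euc n) (hx : 1 ≤ ‖x‖) : jap x ≤ 2 * ‖x‖ := by
  rw [jap]; exact Real.sqrt_le_iff.2 ⟨by linarith, by nlinarith⟩
lemma jap_meas {n : ℕ} : Measurable (jap : Euc n → ℝ) := by
  unfold jap; fun_prop

lemma key_real {m : ℕ} (α β β' lam : ℝ) (hb0 : 0 ≤ β') (hbb : β' ≤ β)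
    (h1 : 2 * α - 2 + m - 2 * β - 2 * β' ≤ 0) (h2 : m - 2 * β - 2 * β' ≤ 2 * lam) (h3 : 2 * lam ≤ m)
    (r : ℝ) (hr : 0 < r) (η θ : Euc (m+1)) (hη : 1 ≤ ‖η‖) (hθ : ‖θ‖ = 1) (hi : ⟪θ, η⟫ ≤ 0)
    (ξ u : Euc (m+1)) (hξ : ξ = (2 : ℝ)⁻¹ • η + (r * ‖η‖ / 2) • θ)
    (hu : u = (2:ℝ)⁻¹ • (η - (r * ‖η‖) • θ)) :
    (‖η‖ ^ (α - 1)) ^ 2 * (r * ‖η‖ / 2) ^ m * (jap ξ ^ (-β)) ^ 2 * (jap u ^ (-β)) ^ 2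
      * ‖θ + ‖u‖⁻¹ • u‖ ^ (2 * β') ≤ (2 ^ (2 * β') * 4 ^ (2 * β + 2 * β')) * r ^ (2 * lam) := by
  set s := 2 * β + 2 * β' with hs
  have hs0 : 0 ≤ s := by linarith
  have hη0 : 0 < ‖η‖ := by linarith
  have hub : ‖η‖ * (1 + r) / 4 ≤ ‖u‖ := by
    have e : ‖u‖ ^ 2 = 4⁻¹ * (‖η‖ ^ 2 - 2 * (r * ‖η‖) * ⟪θ, η⟫ + (r * ‖η‖) ^ 2) := by
      rw [hu, norm_smul, mul_pow, norm_sub_sq_real, norm_smul, inner_smul_right, real_inner_comm, hθ]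
      norm_num [abs_of_pos hr]
      ring
    have h5 : 0 ≤ - (2 * (r * ‖η‖) * ⟪θ, η⟫) := by
      have : 0 ≤ 2 * (r * ‖η‖) := by positivity
      nlinarith
    refine (sq_le_sq₀ (by positivity) (norm_nonneg _)).1 ?_
    rw [e]
    nlinarith [sq_nonneg (‖η‖ * (1 - r)), sq_nonneg (‖η‖), sq_nonneg (r * ‖η‖)]
  have hu0 : 0 < ‖u‖ := lt_of_lt_of_le (by positivity) hub
  have hune : u ≠ 0 := norm_pos_iff.1 hu0
  have ht : ‖θ + ‖u‖⁻¹ • u‖ ≤ 2 * ‖ξ‖ / ‖u‖ := by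
    have hθ0 : θ ≠ 0 := by intro h; simp [h] at hθ
    have := nrm_diff (-((r * ‖η‖) • θ)) u (by simp [hθ0, hr.ne', norm_pos_iff.1 hη0]) hune
    have e1 : ‖-((r * ‖η‖) • θ)‖⁻¹ • (-((r * ‖η‖) • θ)) = -θ := by
      rw [norm_neg, norm_smul, hθ, mul_one, Real.norm_of_nonneg (by positivity), smul_neg, smul_smul,
        inv_mul_cancel₀ (by positivity), one_smul]
    have e2 : -((r * ‖η‖) • θ) - u = -ξ := by
      rw [hξ, hu, smul_sub, smul_smul]; 
      have : (r * ‖η‖) • θ = (2⁻¹ * (r * ‖η‖)) • θ + (r * ‖η‖ / 2) • θ := by rw [← add_smul]; congr 1; ring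
      rw [this]; abel
    rw [e1, e2, norm_neg, ← norm_neg (-θ - _), neg_sub, sub_neg_eq_add, add_comm _ θ] at this
    exact this
  set t := ‖θ + ‖u‖⁻¹ • u‖
  have hJξ := jap_one ξ
  have hJu := jap_one u
  have a1 : t ^ (2 * β') ≤ 2 ^ (2 * β') * jap ξ ^ (2 * β') * ‖u‖ ^ (-(2 * β')) := by
    calc t ^ (2 * β') ≤ (2 * jap ξ / ‖u‖) ^ (2 * β') := by
          apply Real.rpow_le_rpow (norm_nonneg _) _ (by linarith)
          refine ht.trans ?_
          gcongr
          exact jap_norm ξ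
      _ = _ := by
          rw [Real.div_rpow (by positivity) (by positivity), Real.mul_rpow (by positivity) (by positivity),
            Real.rpow_neg (by positivity)]; rfl
  have a2 : (jap ξ ^ (-β)) ^ 2 * jap ξ ^ (2 * β') ≤ 1 := by
    rw [← Real.rpow_natCast, ← Real.rpow_mul (by positivity), ← Real.rpow_add (by positivity)]
    exact Real.rpow_le_one_of_one_le_of_nonpos hJξ (by push_cast; linarith)
  have a3 : (jap u ^ (-β)) ^ 2 ≤ ‖u‖ ^ (-(2 * β)) := by
    rw [← Real.rpow_natCast, ← Real.rpow_mul (by positivity)]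
    rw [show -β * ((2:ℕ):ℝ) = -(2 * β) by push_cast; ring]
    exact Real.rpow_le_rpow_of_nonpos hu0 (jap_norm u) (by linarith)
  have a4 : ‖u‖ ^ (-(2 * β)) * ‖u‖ ^ (-(2 * β')) ≤ 4 ^ s * (‖η‖ ^ (-s) * (1 + r) ^ (-s)) := by
    rw [← Real.rpow_add hu0, show -(2 * β) + -(2 * β') = -s by rw [hs]; ring]
    calc ‖u‖ ^ (-s) ≤ (‖η‖ * (1 + r) / 4) ^ (-s) :=
          Real.rpow_le_rpow_of_nonpos (by positivity) hub (by linarith)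
      _ = _ := by
          rw [Real.div_rpow (by positivity) (by positivity), Real.mul_rpow (by positivity) (by positivity),
            Real.rpow_neg (by norm_num : (0:ℝ) ≤ 4), div_inv_eq_mul]; ring
  have a5 : (‖η‖ ^ (α - 1)) ^ 2 * (r * ‖η‖ / 2) ^ m * ‖η‖ ^ (-s) ≤ r ^ m := by
    have : (‖η‖ ^ (α - 1)) ^ 2 * (r * ‖η‖ / 2) ^ m * ‖η‖ ^ (-s) = r ^ m * (‖η‖ ^ (2 * α - 2 + m - s) * (1/2) ^ m) := by
      have e : ‖η‖ ^ (2 * α - 2 + m - s) = (‖η‖ ^ (α - 1)) ^ 2 * ‖η‖ ^ m * ‖η‖ ^ (-s) := by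
        rw [← Real.rpow_natCast (‖η‖ ^ (α - 1)), ← Real.rpow_mul (by positivity), ← Real.rpow_natCast ‖η‖ m, ← Real.rpow_add hη0, ← Real.rpow_add hη0]
        congr 1; push_cast; ring
      rw [e, div_pow, mul_pow, div_pow]; ring
    rw [this]
    refine mul_le_of_le_one_right (by positivity) ?_
    refine mul_le_one₀ ?_ (by positivity) (pow_le_one₀ (by norm_num) (by norm_num))
    exact Real.rpow_le_one_of_one_le_of_nonpos hη (by linarith)
  have a6 : r ^ m * (1 + r) ^ (-s) ≤ r ^ (2 * lam) := by
    have e : (r : ℝ) ^ m = r ^ (2 * lam) * r ^ (m - 2 * lam) := by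
      rw [← Real.rpow_add hr, ← Real.rpow_natCast]; congr 1; ring
    rw [e, mul_assoc]
    refine mul_le_of_le_one_right (by positivity) ?_
    rw [Real.rpow_neg (by positivity), ← div_eq_mul_inv, div_le_one (by positivity)]
    calc r ^ (m - 2 * lam) ≤ (1 + r) ^ (m - 2 * lam) := Real.rpow_le_rpow hr.le (by linarith) (by linarith)
      _ ≤ _ := Real.rpow_le_rpow_of_exponent_le (by linarith) (by linarith)
  set P := (‖η‖ ^ (α - 1)) ^ 2 * (r * ‖η‖ / 2) ^ m with hP
  have hP0 : 0 ≤ P := by positivity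
  calc P * (jap ξ ^ (-β)) ^ 2 * (jap u ^ (-β)) ^ 2 * t ^ (2 * β')
      ≤ P * (jap ξ ^ (-β)) ^ 2 * ‖u‖ ^ (-(2 * β)) * (2 ^ (2 * β') * jap ξ ^ (2 * β') * ‖u‖ ^ (-(2 * β'))) := by
        gcongr
    _ = 2 ^ (2 * β') * P * ((jap ξ ^ (-β)) ^ 2 * jap ξ ^ (2 * β')) * (‖u‖ ^ (-(2 * β)) * ‖u‖ ^ (-(2 * β'))) := by ring
    _ ≤ 2 ^ (2 * β') * P * 1 * (4 ^ s * (‖η‖ ^ (-s) * (1 + r) ^ (-s))) := by gcongr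
    _ = 2 ^ (2 * β') * 4 ^ s * ((P * ‖η‖ ^ (-s)) * (1 + r) ^ (-s)) := by ring
    _ ≤ 2 ^ (2 * β') * 4 ^ s * (r ^ m * (1 + r) ^ (-s)) := by gcongr
    _ ≤ _ := by gcongr

def Qf {n : ℕ} (F : SchwartzMap (Euc n) ℂ) (β : ℝ) (ξ : Euc n) : ℝ≥0∞ := ‖F ξ‖ₑ * ENNReal.ofReal (jap ξ ^ (-β))

lemma Qf_meas {n : ℕ} (F : SchwartzMap (Euc n) ℂ) (β : ℝ) : Measurable (Qf F β) := by
  have h1 : Continuous (fun x => F x) := F.continuous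
  have := jap_meas (n := n)
  unfold Qf; fun_prop

/-- the half integral -/
def Hf {m : ℕ} (F₁ F₂ : SchwartzMap (Euc (m+1)) ℂ) (β r : ℝ) (η : Euc (m+1)) : ℝ≥0∞ :=
  ∫⁻ θ in {θ : Euc (m+1) | ⟪θ, η⟫ ≤ 0}, Qf F₁ β ((2 : ℝ)⁻¹ • η + (r * ‖η‖ / 2) • θ) *
    Qf F₂ β ((2:ℝ)⁻¹ • (η - (r * ‖η‖) • θ)) ∂(nuS m)

lemma half_ms {m : ℕ} (η : Euc (m+1)) : MeasurableSet {θ : Euc (m+1) | ⟪θ, η⟫ ≤ 0} := by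
  have hc : Continuous (fun θ : Euc (m+1) => ⟪θ, η⟫) := by fun_prop
  exact (isClosed_le hc continuous_const).measurableSet

lemma nuS_norm {m : ℕ} : ∀ᵐ θ ∂(nuS m), ‖θ‖ = 1 := by
  have := ae_restrict_mem (μ := (MeasureTheory.Measure.hausdorffMeasure (m : ℝ) : Measure (Euc (m+1)))) (s := Metric.sphere (0:Euc (m+1)) 1) Metric.isClosed_sphere.measurableSet
  filter_upwards [this] with θ h
  simpa using h

lemma half_bound (m : ℕ) (hm : 1 ≤ m) (α β β' lam : ℝ) (hb0 : 0 ≤ β') (hbb : β' ≤ β) (hbm : 2 * β' < m)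
    (h1 : 2 * α - 2 + m - 2 * β - 2 * β' ≤ 0) (h2 : m - 2 * β - 2 * β' ≤ 2 * lam) (h3 : 2 * lam ≤ m) :
    ∃ C : ℝ≥0∞, C < ∞ ∧ ∀ (F₁ F₂ : SchwartzMap (Euc (m+1)) ℂ) (r : ℝ), 0 < r →
      ∫⁻ η in {η : Euc (m+1) | 1 ≤ ‖η‖}, (ENNReal.ofReal (‖η‖ ^ (α - 1)) *
        (ENNReal.ofReal ((r * ‖η‖ / 2) ^ m) * Hf F₁ F₂ β r η)) ^ 2 
       ≤ C * ENNReal.ofReal (r ^ (2 * lam)) * (∫⁻ x, Gd F₁ x) * (∫⁻ x, Gd F₂ x) := by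
  obtain ⟨Ct, hCt, ht⟩ := trace_bound m
  obtain ⟨Cc, hCc, hc⟩ := cap_bound m hm (2 * β') (by linarith) hbm
  have := nuS_finite m
  set K : ℝ := 2 ^ (2 * β') * 4 ^ (2 * β + 2 * β') with hK
  refine ⟨Ct * ENNReal.ofReal K * 2 ^ (m+1) * Cc, ?_, ?_⟩
  · exact ENNReal.mul_lt_top (ENNReal.mul_lt_top (ENNReal.mul_lt_top hCt ENNReal.ofReal_lt_top) (by finiteness)) hCc
  intro F₁ F₂ r hr
  have hF1 : Continuous (fun x => F₁ x) := F₁.continuous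
  have hF2 : Continuous (fun x => F₂ x) := F₂.continuous
  have hjm := jap_meas (n := m+1)
  set N : Euc (m+1) × Euc (m+1) → ℝ≥0∞ := fun p => ‖p.2 + ‖p.1‖⁻¹ • p.1‖ₑ ^ (-(2 * β')) * ‖F₂ p.1‖ₑ ^ 2 with hN
  have hF2m : Measurable (fun x => ‖F₂ x‖ₑ) := hF2.enorm.measurable
  have hNm : Measurable N := by
    refine Measurable.mul (by fun_prop) ((hF2m.comp measurable_fst).pow_const 2)
  set U : Euc (m+1) → Euc (m+1) → Euc (m+1) := fun η θ => (2:ℝ)⁻¹ • (η - (r * ‖η‖) • θ) with hU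
  have hUm : Measurable (fun p : Euc (m+1) × Euc (m+1) => U p.1 p.2) := by fun_prop
  set D : Set (Euc (m+1) × Euc (m+1)) := {p | p.1 ≠ 0 ∧ ⟪p.2, p.1⟫ ≤ 0} with hD
  have hDm : MeasurableSet D := by
    refine MeasurableSet.inter ?_ ?_
    · exact measurable_fst (measurableSet_singleton _).compl
    · have hc : Continuous (fun p : Euc (m+1) × Euc (m+1) => ⟪p.2, p.1⟫) := by fun_prop
      exact (isClosed_le hc continuous_const).measurableSet
  set M : Euc (m+1) → Euc (m+1) → ℝ≥0∞ := fun η θ => D.indicator (fun p => N (U p.1 p.2, p.2)) (η, θ) with hM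
  have hMm : Measurable (Function.uncurry M) := by
    refine Measurable.indicator ?_ hDm
    exact hNm.comp (hUm.prodMk measurable_snd)
  -- pointwise in η
  have hpt : ∀ η : Euc (m+1), 1 ≤ ‖η‖ → (ENNReal.ofReal (‖η‖ ^ (α - 1)) *
        (ENNReal.ofReal ((r * ‖η‖ / 2) ^ m) * Hf F₁ F₂ β r η)) ^ 2 ≤
      (Ct * ∫⁻ x, Gd F₁ x) * (ENNReal.ofReal (K * r ^ (2 * lam)) * ∫⁻ θ, M η θ ∂(nuS m)) := by
    intro η hη
    have hη0 : 0 < ‖η‖ := by linarith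
    set ρ := r * ‖η‖ / 2 with hρ
    have hρ0 : 0 < ρ := by positivity
    set S := {θ : Euc (m+1) | ⟪θ, η⟫ ≤ 0} with hS
    set f : Euc (m+1) → ℝ≥0∞ := fun θ => ‖F₁ ((2 : ℝ)⁻¹ • η + ρ • θ)‖ₑ
    set w : Euc (m+1) → ℝ≥0∞ := fun θ => ENNReal.ofReal (jap ((2 : ℝ)⁻¹ • η + ρ • θ) ^ (-β)) * 
      (‖F₂ (U η θ)‖ₑ * ENNReal.ofReal (jap (U η θ) ^ (-β)))
    have hUm' : Measurable (fun θ => U η θ) := by fun_prop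
    have hfm : Measurable f := by fun_prop
    have hwm : Measurable w := by
      refine Measurable.mul (by fun_prop) ((hF2m.comp hUm').mul (by fun_prop))
    have hcs : (Hf F₁ F₂ β r η) ^ 2 ≤ (∫⁻ θ, f θ ^ 2 ∂(nuS m)) * ∫⁻ θ in S, w θ ^ 2 ∂(nuS m) := by
      have e : Hf F₁ F₂ β r η = ∫⁻ θ in S, (f * w) θ ∂(nuS m) := by
        rw [Hf]; congr 1; ext θ
        simp only [Qf, Pi.mul_apply, f, w, hU, ← hρ]; ring
      rw [e]
      have h := ENNReal.lintegral_mul_le_Lp_mul_Lq ((nuS m).restrict S) (p := 2) (q := 2) (by constructor <;> norm_num) hfm.aemeasurable hwm.aemeasurable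
      have h' := pow_le_pow_left' h 2
      refine h'.trans ?_
      rw [mul_pow, ← ENNReal.rpow_natCast, ← ENNReal.rpow_natCast, ← ENNReal.rpow_mul, ← ENNReal.rpow_mul]
      norm_num
      gcongr
      exact Measure.restrict_le_self
    calc _ = (ENNReal.ofReal (ρ ^ m) * 1) * (ENNReal.ofReal (‖η‖ ^ (α - 1)) ^ 2 * ENNReal.ofReal (ρ ^ m) * (Hf F₁ F₂ β r η) ^ 2) := by ring
      _ ≤ (ENNReal.ofReal (ρ ^ m) * 1) * (ENNReal.ofReal (‖η‖ ^ (α - 1)) ^ 2 * ENNReal.ofReal (ρ ^ m) * ((∫⁻ θ, f θ ^ 2 ∂(nuS m)) * ∫⁻ θ in S, w θ ^ 2 ∂(nuS m))) := by gcongr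
      _ = (ENNReal.ofReal (ρ ^ m) * (∫⁻ θ, f θ ^ 2 ∂(nuS m))) * (ENNReal.ofReal (‖η‖ ^ (α - 1)) ^ 2 * ENNReal.ofReal (ρ ^ m) * ∫⁻ θ in S, w θ ^ 2 ∂(nuS m)) := by ring
      _ ≤ _ := by
        refine mul_le_mul' (ht F₁ _ ρ hρ0) ?_
        rw [← lintegral_const_mul _ (hwm.pow_const 2), ← lintegral_const_mul (f := fun θ => M η θ) _ (hMm.comp measurable_prodMk_left), ← lintegral_indicator (half_ms η)]
        refine lintegral_mono_ae ?_
        filter_upwards [nuS_norm (m := m)] with θ hθ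
        by_cases hin : θ ∈ S
        · rw [indicator_of_mem hin]
          have hmem : (η, θ) ∈ D := ⟨norm_pos_iff.1 hη0, hin⟩
          have hkey := key_real α β β' lam hb0 hbb h1 h2 h3 r hr η θ hη hθ hin _ _ rfl rfl
          rw [← hρ] at hkey
          simp only [hM, indicator_of_mem hmem, hN]
          set ξ := (2 : ℝ)⁻¹ • η + ρ • θ with hξ
          have hE : ENNReal.ofReal (‖η‖ ^ (α - 1)) ^ 2 * ENNReal.ofReal (ρ ^ m) * ENNReal.ofReal (jap ξ ^ (-β)) ^ 2 *
              ENNReal.ofReal (jap (U η θ) ^ (-β)) ^ 2 ≤ ENNReal.ofReal (K * r ^ (2 * lam)) *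
                ‖θ + ‖U η θ‖⁻¹ • U η θ‖ₑ ^ (-(2 * β')) := by
            have hpos : 0 < K * r ^ (2 * lam) := by positivity
            rw [ENNReal.rpow_neg, ← div_eq_mul_inv, ENNReal.le_div_iff_mul_le (Or.inr (by simpa using hpos))
              (Or.inr ENNReal.ofReal_ne_top)]
            have j1 := jap_one ξ
            have j2 := jap_one (U η θ)
            refine le_trans (le_of_eq ?_) (ENNReal.ofReal_le_ofReal hkey)
            rw [← ofReal_norm, ENNReal.ofReal_rpow_of_nonneg (norm_nonneg _) (by linarith),
              ← ENNReal.ofReal_pow (by positivity), ← ENNReal.ofReal_pow (by positivity), ← ENNReal.ofReal_pow (by positivity),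
              ← ENNReal.ofReal_mul (by positivity), ← ENNReal.ofReal_mul (by positivity), ← ENNReal.ofReal_mul (by positivity),
              ← ENNReal.ofReal_mul (by positivity)]
          calc _ = (ENNReal.ofReal (‖η‖ ^ (α - 1)) ^ 2 * ENNReal.ofReal (ρ ^ m) * ENNReal.ofReal (jap ξ ^ (-β)) ^ 2 *
              ENNReal.ofReal (jap (U η θ) ^ (-β)) ^ 2) * ‖F₂ (U η θ)‖ₑ ^ 2 := by simp only [w]; ring
            _ ≤ _ := mul_le_mul' hE le_rfl
            _ = _ := by ring
        · rw [indicator_of_notMem hin]; exact zero_le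
  have hswap : ∫⁻ η, ∫⁻ θ, M η θ ∂(nuS m) ≤ 2 ^ (m+1) * (Cc * ∫⁻ x, Gd F₂ x) := by
    rw [lintegral_lintegral_swap hMm.aemeasurable]
    calc ∫⁻ θ, (∫⁻ η, M η θ) ∂(nuS m) ≤ ∫⁻ θ, (2 ^ (m+1) * ∫⁻ u, N (u, θ)) ∂(nuS m) := by
          refine lintegral_mono_ae ?_
          filter_upwards [nuS_norm (m := m)] with θ hθ
          refine le_trans (le_of_eq ?_) (cov_bound r hr θ hθ (fun u => N (u, θ)))
          rw [← lintegral_indicator]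
          · rfl
          · refine MeasurableSet.inter (measurableSet_singleton _).compl ?_
            have hc : Continuous (fun η : Euc (m+1) => ⟪θ, η⟫) := by fun_prop
            exact (isClosed_le hc continuous_const).measurableSet
      _ = 2 ^ (m+1) * ∫⁻ θ, (∫⁻ u, N (u, θ)) ∂(nuS m) := by
          rw [lintegral_const_mul]
          exact hNm.lintegral_prod_left'
      _ = 2 ^ (m+1) * ∫⁻ u, ∫⁻ θ, N (u, θ) ∂(nuS m) := by
          congr 1
          exact (lintegral_lintegral_swap (f := fun u θ => N (u, θ)) hNm.aemeasurable).symm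
      _ ≤ 2 ^ (m+1) * ∫⁻ u, Cc * Gd F₂ u := by
          gcongr with u
          simp only [hN]
          rw [lintegral_mul_const _ (by fun_prop)]
          refine mul_le_mul' ?_ ?_
          · have := hc (-(‖u‖⁻¹ • u))
            simpa only [sub_neg_eq_add] using this
          · rw [Gd]; exact le_self_add
      _ = _ := by rw [lintegral_const_mul _ (Gd_meas F₂)]
  calc _ ≤ ∫⁻ η in {η : Euc (m+1) | 1 ≤ ‖η‖}, (Ct * ∫⁻ x, Gd F₁ x) * (ENNReal.ofReal (K * r ^ (2 * lam)) * ∫⁻ θ, M η θ ∂(nuS m)) :=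
        setLIntegral_mono' (isClosed_le continuous_const continuous_norm).measurableSet hpt
    _ ≤ ∫⁻ η, (Ct * ∫⁻ x, Gd F₁ x) * (ENNReal.ofReal (K * r ^ (2 * lam)) * ∫⁻ θ, M η θ ∂(nuS m)) := setLIntegral_le_lintegral _ _
    _ = (Ct * ∫⁻ x, Gd F₁ x) * (ENNReal.ofReal (K * r ^ (2 * lam)) * ∫⁻ η, ∫⁻ θ, M η θ ∂(nuS m)) := by
        have h5 : Measurable (fun η => ∫⁻ θ, M η θ ∂(nuS m)) := hMm.lintegral_prod_right'
        rw [lintegral_const_mul _ (h5.const_mul _), lintegral_const_mul _ h5]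
    _ ≤ (Ct * ∫⁻ x, Gd F₁ x) * (ENNReal.ofReal (K * r ^ (2 * lam)) * (2 ^ (m+1) * (Cc * ∫⁻ x, Gd F₂ x))) := by gcongr
    _ = _ := by rw [ENNReal.ofReal_mul (by positivity)]; ring


lemma nuS_neg (m : ℕ) (g : Euc (m+1) → ℝ≥0∞) : ∫⁻ θ, g (-θ) ∂(nuS m) = ∫⁻ θ, g θ ∂(nuS m) := by
  have h1 := (IsometryEquiv.neg (Euc (m+1))).measurePreserving_hausdorffMeasure (m : ℝ)
  have h2 := h1.restrict_preimage (s := Metric.sphere (0 : Euc (m+1)) 1) Metric.isClosed_sphere.measurableSet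
  have h3 : (IsometryEquiv.neg (Euc (m+1))) ⁻¹' (Metric.sphere (0 : Euc (m+1)) 1) = Metric.sphere 0 1 := by
    ext x; simp
  rw [h3] at h2
  have := h2.lintegral_comp_emb (IsometryEquiv.neg (Euc (m+1))).toHomeomorph.measurableEmbedding g
  exact this

lemma Hf_meas {m : ℕ} (F₁ F₂ : SchwartzMap (Euc (m+1)) ℂ) (β r : ℝ) : Measurable (Hf F₁ F₂ β r) := by
  have := nuS_finite m
  have hD : MeasurableSet {p : Euc (m+1) × Euc (m+1) | ⟪p.2, p.1⟫ ≤ 0} := by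
    have hc : Continuous (fun p : Euc (m+1) × Euc (m+1) => ⟪p.2, p.1⟫) := by fun_prop
    exact (isClosed_le hc continuous_const).measurableSet
  have e : Hf F₁ F₂ β r = fun η => ∫⁻ θ, {p : Euc (m+1) × Euc (m+1) | ⟪p.2, p.1⟫ ≤ 0}.indicator 
     (fun p => Qf F₁ β ((2 : ℝ)⁻¹ • p.1 + (r * ‖p.1‖ / 2) • p.2) *
    Qf F₂ β ((2:ℝ)⁻¹ • (p.1 - (r * ‖p.1‖) • p.2))) (η, θ) ∂(nuS m) := by
    ext η
    rw [Hf, ← lintegral_indicator (half_ms η)]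
    rfl
  rw [e]
  refine Measurable.lintegral_prod_right' ?_
  refine Measurable.indicator ?_ hD
  exact ((Qf_meas F₁ β).comp (by fun_prop)).mul ((Qf_meas F₂ β).comp (by fun_prop))

lemma ft_enorm {n : ℕ} (β : ℝ) (f F : SchwartzMap (Euc n) ℂ) (hF : ∀ ξ, F ξ = ((jap ξ ^ β : ℝ) : ℂ) * ft f ξ) (ξ : Euc n) :
    ‖ft f ξ‖ₑ = Qf F β ξ := by
  have j := jap_one ξ
  have h0 : 0 < jap ξ ^ β := by positivity
  rw [Qf, hF, ← ofReal_norm, ← ofReal_norm, ← ENNReal.ofReal_mul (by positivity)]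
  congr 1
  rw [norm_mul, Complex.norm_real, Real.norm_of_nonneg h0.le, Real.rpow_neg (by positivity)]
  field_simp

lemma full_le {m : ℕ} (F₁ F₂ : SchwartzMap (Euc (m+1)) ℂ) (β r : ℝ) (η : Euc (m+1)) :
    ∫⁻ θ, Qf F₁ β ((2 : ℝ)⁻¹ • η + (r * ‖η‖ / 2) • θ) * Qf F₂ β (η - ((2 : ℝ)⁻¹ • η + (r * ‖η‖ / 2) • θ)) ∂(nuS m)
      ≤ Hf F₁ F₂ β r η + Hf F₂ F₁ β r η := by
  have e1 : ∀ θ : Euc (m+1), η - ((2 : ℝ)⁻¹ • η + (r * ‖η‖ / 2) • θ) = (2:ℝ)⁻¹ • (η - (r * ‖η‖) • θ) := by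
    intro θ; module
  simp only [e1]
  rw [← lintegral_add_compl _ (half_ms η)]
  refine add_le_add le_rfl ?_
  rw [Hf, ← lintegral_indicator (half_ms η), ← nuS_neg, ← lintegral_indicator (half_ms η).compl]
  refine lintegral_mono fun θ => ?_
  by_cases h : ⟪θ, η⟫ ≤ 0
  · rw [indicator_of_notMem (by simpa using h)]; exact zero_le
  · rw [indicator_of_mem (by simpa using h), indicator_of_mem (by simp only [mem_setOf_eq, inner_neg_left]; linarith)]
    have e2 : (2 : ℝ)⁻¹ • η + (r * ‖η‖ / 2) • -θ = (2:ℝ)⁻¹ • (η - (r * ‖η‖) • θ) := by module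
    have e3 : (2:ℝ)⁻¹ • (η - (r * ‖η‖) • -θ) = (2 : ℝ)⁻¹ • η + (r * ‖η‖ / 2) • θ := by module
    rw [e2, e3, mul_comm]

lemma params (m : ℕ) (hm : 1 ≤ m) (β α : ℝ) (hβ : 0 ≤ β)
    (hrange : ((((m+1 : ℕ) : ℝ) - 3) / 2 < β ∧ β < (((m+1 : ℕ) : ℝ) - 1) / 2 ∧
        α ≤ 2 * β - (((m+1 : ℕ) : ℝ) - 3) / 2) ∨
      ((((m+1 : ℕ) : ℝ) - 1) / 2 ≤ β ∧ α < β + 1)) :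
    ∃ β' lam : ℝ, 0 ≤ β' ∧ β' ≤ β ∧ 2 * β' < m ∧ 2 * α - 2 + m - 2 * β - 2 * β' ≤ 0 ∧
      m - 2 * β - 2 * β' ≤ 2 * lam ∧ 2 * lam ≤ m ∧ 0 < lam ∧ lam < 1 := by
  have hm' : (1:ℝ) ≤ m := by exact_mod_cast hm
  push_cast at hrange
  have fin : ∀ β' : ℝ, 0 ≤ β' → m - 2 * β - 2 * β' < 2 → ∃ lam : ℝ, m - 2 * β - 2 * β' ≤ 2 * lam ∧ 2 * lam ≤ m ∧ 0 < lam ∧ lam < 1 := by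
    intro β' h0 h
    refine ⟨max (1/2) ((m - 2 * β - 2 * β') / 2), ?_, ?_, ?_, ?_⟩
    · linarith [le_max_right (1/2 : ℝ) ((m - 2 * β - 2 * β') / 2)]
    · have : max (1/2 : ℝ) ((m - 2 * β - 2 * β') / 2) ≤ m / 2 := max_le (by linarith) (by linarith)
      linarith
    · exact lt_max_of_lt_left (by norm_num)
    · exact max_lt (by norm_num) (by linarith)
  rcases hrange with ⟨a, b, c⟩ | ⟨a, b⟩
  · obtain ⟨lam, h⟩ := fin β hβ (by
      rcases lt_or_ge (m : ℝ) 2 with h | h <;> linarith)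
    exact ⟨β, lam, hβ, le_rfl, by linarith, by linarith, h⟩
  · set β' := max (m / 2 - (β + 1 - α)) 0
    have h0 : 0 ≤ β' := le_max_right _ _
    have h1 : m / 2 - (β + 1 - α) ≤ β' := le_max_left _ _
    have h2 : β' < m / 2 := max_lt (by linarith) (by linarith)
    obtain ⟨lam, h⟩ := fin β' h0 (by linarith)
    exact ⟨β', lam, h0, by linarith, by linarith, by linarith, h⟩

lemma jap_rpow_le {n : ℕ} (α : ℝ) (η : Euc n) (hη : 1 ≤ ‖η‖) : jap η ^ α ≤ 2 ^ |α| * ‖η‖ ^ α := by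
  have h0 : 0 < ‖η‖ := by linarith
  have j := jap_one η
  rcases le_total 0 α with h | h
  · rw [abs_of_nonneg h, ← Real.mul_rpow (by norm_num) h0.le]
    exact Real.rpow_le_rpow (by linarith) (jap_le η hη) h
  · refine (Real.rpow_le_rpow_of_nonpos h0 (jap_norm η) h).trans ?_
    exact le_mul_of_one_le_left (by positivity) (Real.one_le_rpow (by norm_num) (abs_nonneg _))

lemma ft_pt {m : ℕ} (α β : ℝ) (f₁ f₂ F₁ F₂ : SchwartzMap (Euc (m+1)) ℂ)
    (hF₁ : ∀ ξ, F₁ ξ = ((jap ξ ^ β : ℝ) : ℂ) * ft f₁ ξ) (hF₂ : ∀ ξ, F₂ ξ = ((jap ξ ^ β : ℝ) : ℂ) * ft f₂ ξ)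
    (r : ℝ) (hr : 0 < r) (c : ℝ) (hc : c ∈ Icc (0:ℝ) 1) (η : Euc (m+1)) (hη : 1 ≤ ‖η‖) :
    ‖(jap η ^ α : ℝ) * (c * Kr r (ft ⇑f₁) (ft ⇑f₂) η)‖ₑ ≤ ENNReal.ofReal (2 ^ |α|) *
      (ENNReal.ofReal (‖η‖ ^ (α - 1)) * (ENNReal.ofReal ((r * ‖η‖ / 2) ^ m) * Hf F₁ F₂ β r η)
      + ENNReal.ofReal (‖η‖ ^ (α - 1)) * (ENNReal.ofReal ((r * ‖η‖ / 2) ^ m) * Hf F₂ F₁ β r η)) := by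
  have h0 : 0 < ‖η‖ := by linarith
  have j := jap_one η
  have hK : ‖∫ ξ, ‖ft f₁ ξ‖ * ‖ft f₂ (η - ξ)‖ ∂(ewaldM (m+1) r η)‖ₑ ≤ 
      ENNReal.ofReal ((r * ‖η‖ / 2) ^ m) * (Hf F₁ F₂ β r η + Hf F₂ F₁ β r η) := by
    refine (enorm_integral_le_lintegral_enorm _).trans ?_
    have e : ∀ ξ, ‖‖ft f₁ ξ‖ * ‖ft f₂ (η - ξ)‖‖ₑ = Qf F₁ β ξ * Qf F₂ β (η - ξ) := by
      intro ξ
      rw [enorm_mul, enorm_norm, enorm_norm, ft_enorm β f₁ F₁ hF₁, ft_enorm β f₂ F₂ hF₂]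
    simp only [e]
    refine (ewald_le m r hr η (norm_pos_iff.1 h0) _ ?_).trans ?_
    · exact (Qf_meas F₁ β).mul ((Qf_meas F₂ β).comp (by fun_prop))
    · exact mul_le_mul' le_rfl (full_le F₁ F₂ β r η)
  rw [Kr, enorm_mul, enorm_mul, enorm_mul]
  have hcc : ‖c‖ₑ ≤ 1 := by
    rw [Real.enorm_eq_ofReal hc.1]; exact ENNReal.ofReal_le_one.2 hc.2
  have hj : ‖jap η ^ α‖ₑ * ‖‖η‖⁻¹‖ₑ ≤ ENNReal.ofReal (2 ^ |α|) * ENNReal.ofReal (‖η‖ ^ (α - 1)) := by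
    rw [Real.enorm_eq_ofReal (by positivity), Real.enorm_eq_ofReal (by positivity), ← ENNReal.ofReal_mul (by positivity),
      ← ENNReal.ofReal_mul (by positivity)]
    apply ENNReal.ofReal_le_ofReal
    rw [Real.rpow_sub h0, Real.rpow_one, div_eq_mul_inv, ← mul_assoc]
    gcongr
    exact jap_rpow_le α η hη
  calc _ = ‖c‖ₑ * (‖jap η ^ α‖ₑ * ‖‖η‖⁻¹‖ₑ) * ‖∫ ξ, ‖ft f₁ ξ‖ * ‖ft f₂ (η - ξ)‖ ∂(ewaldM (m+1) r η)‖ₑ := by ring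
    _ ≤ 1 * (ENNReal.ofReal (2 ^ |α|) * ENNReal.ofReal (‖η‖ ^ (α - 1))) * (ENNReal.ofReal ((r * ‖η‖ / 2) ^ m) * (Hf F₁ F₂ β r η + Hf F₂ F₁ β r η)) :=
        mul_le_mul' (mul_le_mul' hcc hj) hK
    _ = _ := by ring

lemma add_sq_le' (a b : ℝ≥0∞) : (a + b) ^ 2 ≤ 2 * (a ^ 2 + b ^ 2) := by
  have h := ENNReal.rpow_add_le_mul_rpow_add_rpow a b (p := 2) (by norm_num)
  norm_num at h
  exact h

theorem stmt5 (n : ℕ) (hn : 2 ≤ n) (β α : ℝ) (hβ : 0 ≤ β)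
    (hrange : (((n : ℝ) - 3) / 2 < β ∧ β < ((n : ℝ) - 1) / 2 ∧
        α ≤ 2 * β - ((n : ℝ) - 3) / 2) ∨
      (((n : ℝ) - 1) / 2 ≤ β ∧ α < β + 1))
    (C₀ : ℝ) (hC₀ : 1 ≤ C₀) (χ : Euc n → ℝ) (hχsm : ContDiff ℝ (⊤ : ℕ∞) χ)
    (hχ01 : ∀ ξ, χ ξ ∈ Set.Icc (0 : ℝ) 1)
    (hχ1 : ∀ ξ : Euc n, 2 * C₀ < ‖ξ‖ → χ ξ = 1)
    (hχ0 : ∀ ξ : Euc n, ‖ξ‖ < C₀ → χ ξ = 0) :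
    ∃ lam C : ℝ, 0 < lam ∧ lam < 1 ∧ 0 < C ∧
      ∀ (f₁ f₂ : SchwartzMap (Euc n) ℂ) (r : ℝ), 0 < r →
        eLpNorm (fun η : Euc n => (jap η ^ α : ℝ) * (χ η * Kr r (ft ⇑f₁) (ft ⇑f₂) η))
            2 volume
          ≤ ENNReal.ofReal (C * r ^ lam) * wSobNorm β 1 (⇑f₁) * wSobNorm β 1 (⇑f₂) := by
  obtain ⟨m, rfl⟩ : ∃ m, n = m + 1 := ⟨n - 1, by omega⟩
  have hm : 1 ≤ m := by omega
  obtain ⟨β', lam, hb0, hbb, hbm, h1, h2, h3, hl0, hl1⟩ := params m hm β α hβ hrange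
  obtain ⟨Ch, hCh, hh⟩ := half_bound m hm α β β' lam hb0 hbb hbm h1 h2 h3
  set T : ℝ≥0∞ := ENNReal.ofReal (2 ^ |α|) ^ 2 * 4 * Ch * ENNReal.ofReal ((2 * Real.pi) ^ (m+1)) ^ 2 with hT
  have hTf : T ≠ ∞ := by
    have := hCh.ne
    finiteness
  refine ⟨lam, √(T.toReal) + 1, hl0, hl1, by positivity, ?_⟩
  intro f₁ f₂ r hr
  obtain ⟨F₁, hF₁, hG₁⟩ := exists_F β f₁
  obtain ⟨F₂, hF₂, hG₂⟩ := exists_F β f₂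
  set W₁ := wSobNorm β 1 f₁
  set W₂ := wSobNorm β 1 f₂
  set h : Euc (m+1) → ℝ := fun η => (jap η ^ α : ℝ) * (χ η * Kr r (ft ⇑f₁) (ft ⇑f₂) η) with hh'
  set A : SchwartzMap (Euc (m+1)) ℂ → SchwartzMap (Euc (m+1)) ℂ → Euc (m+1) → ℝ≥0∞ := fun F G η =>
    ENNReal.ofReal (‖η‖ ^ (α - 1)) * (ENNReal.ofReal ((r * ‖η‖ / 2) ^ m) * Hf F G β r η) with hA
  have hAm : ∀ F G, Measurable (A F G) := by
    intro F G
    have := Hf_meas F G β r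
    simp only [hA]
    fun_prop
  set S := {η : Euc (m+1) | 1 ≤ ‖η‖} with hS
  have hSm : MeasurableSet S := (isClosed_le continuous_const continuous_norm).measurableSet
  have hIbd : ∫⁻ η, ‖h η‖ₑ ^ 2 ≤ T * ENNReal.ofReal (r ^ (2 * lam)) * (W₁ ^ 2 * W₂ ^ 2) := by
    calc ∫⁻ η, ‖h η‖ₑ ^ 2 ≤ ∫⁻ η, S.indicator (fun η => ENNReal.ofReal (2 ^ |α|) ^ 2 * (2 * (A F₁ F₂ η ^ 2 + A F₂ F₁ η ^ 2))) η := by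
          refine lintegral_mono fun η => ?_
          by_cases hη : η ∈ S
          · rw [indicator_of_mem hη]
            refine (pow_le_pow_left' (ft_pt α β f₁ f₂ F₁ F₂ hF₁ hF₂ r hr (χ η) (hχ01 η) η hη) 2).trans ?_
            rw [mul_pow]
            exact mul_le_mul' le_rfl (add_sq_le' _ _)
          · have hη' : ‖η‖ < C₀ := lt_of_lt_of_le (not_le.1 hη) hC₀
            simp [hh', hχ0 η hη']
      _ = ENNReal.ofReal (2 ^ |α|) ^ 2 * (2 * ((∫⁻ η in S, A F₁ F₂ η ^ 2) + ∫⁻ η in S, A F₂ F₁ η ^ 2)) := by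
          have a1 := (hAm F₁ F₂).pow_const 2
          have a2 := (hAm F₂ F₁).pow_const 2
          have a3 : Measurable (fun η => A F₁ F₂ η ^ 2 + A F₂ F₁ η ^ 2) := a1.add a2
          rw [lintegral_indicator hSm, lintegral_const_mul _ (a3.const_mul _), lintegral_const_mul _ a3,
            lintegral_add_left a1]
      _ ≤ ENNReal.ofReal (2 ^ |α|) ^ 2 * (2 * (Ch * ENNReal.ofReal (r ^ (2 * lam)) * (∫⁻ x, Gd F₁ x) * (∫⁻ x, Gd F₂ x)
            + Ch * ENNReal.ofReal (r ^ (2 * lam)) * (∫⁻ x, Gd F₂ x) * (∫⁻ x, Gd F₁ x))) := by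
          gcongr
          · exact hh F₁ F₂ r hr
          · exact hh F₂ F₁ r hr
      _ = ENNReal.ofReal (2 ^ |α|) ^ 2 * 4 * Ch * ENNReal.ofReal (r ^ (2 * lam)) * ((∫⁻ x, Gd F₁ x) * (∫⁻ x, Gd F₂ x)) := by ring
      _ ≤ ENNReal.ofReal (2 ^ |α|) ^ 2 * 4 * Ch * ENNReal.ofReal (r ^ (2 * lam)) * 
          ((ENNReal.ofReal ((2 * Real.pi) ^ (m+1)) * W₁ ^ 2) * (ENNReal.ofReal ((2 * Real.pi) ^ (m+1)) * W₂ ^ 2)) := by gcongr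
      _ = _ := by rw [hT]; ring
  rw [eLpNorm_eq_lintegral_rpow_enorm_toReal (by norm_num) (by norm_num)]
  have hTle : T ≤ ENNReal.ofReal (√(T.toReal) + 1) ^ 2 := by
    rw [← ENNReal.ofReal_pow (by positivity)]
    refine ENNReal.le_ofReal_iff_toReal_le hTf (by positivity) |>.2 ?_
    nlinarith [Real.sq_sqrt (ENNReal.toReal_nonneg (a := T)), Real.sqrt_nonneg T.toReal]
  have hfin : ∫⁻ η, ‖h η‖ₑ ^ 2 ≤ (ENNReal.ofReal ((√(T.toReal) + 1) * r ^ lam) * W₁ * W₂) ^ 2 := by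
    refine hIbd.trans ?_
    have e : ENNReal.ofReal (r ^ (2 * lam)) = ENNReal.ofReal (r ^ lam) ^ 2 := by
      rw [← ENNReal.ofReal_pow (by positivity), ← Real.rpow_natCast, ← Real.rpow_mul hr.le]
      congr 2; push_cast; ring
    rw [e, ENNReal.ofReal_mul (by positivity)]
    calc _ ≤ ENNReal.ofReal (√(T.toReal) + 1) ^ 2 * ENNReal.ofReal (r ^ lam) ^ 2 * (W₁ ^ 2 * W₂ ^ 2) := by gcongr
      _ = _ := by ring
  have h4 := ENNReal.rpow_le_rpow hfin (z := 1/2) (by norm_num)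
  rw [← ENNReal.rpow_natCast _ 2, ← ENNReal.rpow_mul] at h4
  norm_num at h4 ⊢
  exact h4
end
end

section
/- Let n ≥ 2 and let q be a Schwartz function on ℝⁿ. Then for every fixed η ∈ ℝⁿ ∖ {0} the map r ↦ S_r(q)(η) is smooth on (0,∞). Moreover, for every 0 < δ < 1 there is a constant C (depending on n and δ) such that for all η ∈ ℝⁿ ∖ {0} and all r ∈ (1−δ, 1+δ), |∂_r S_r(q)(η)| ≤ C K_r(q̂, q̂)(η) + C |η| ∑_{i=1}^n K_r( (x_i q)^∧ , q̂ )(η), where (x_i q)(x) := x_i q(x). -/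
open MeasureTheory Filter Set
open scoped ENNReal RealInnerProductSpace

noncomputable section

open scoped ContDiff

/-- The closed half of the unit sphere opposite to `v` has finite Hausdorff measure. -/
lemma halfSphere_lt_top {n : ℕ} (hn : 2 ≤ n) (v : Euc n) (hv : ‖v‖ = 1) :
    Measure.hausdorffMeasure ((n : ℝ) - 1)
      ({x : Euc n | x ∈ Metric.sphere (0 : Euc n) 1 ∧ ⟪v, x⟫ ≤ 0}) < ⊤ := by
  classical
  have hv0 : v ≠ 0 := by rintro rfl; simp at hv
  let W := (Submodule.span ℝ {v})ᗮ
  have hfr : Module.finrank ℝ W = n - 1 := by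
    have h1 := Submodule.finrank_add_finrank_orthogonal (Submodule.span ℝ {v})
    rw [finrank_span_singleton hv0, finrank_euclideanSpace_fin] at h1
    have : Module.finrank ℝ W = Module.finrank ℝ (Submodule.span ℝ {v})ᗮ := rfl
    omega
  have hd : ((n : ℝ) - 1) = (Module.finrank ℝ W : ℝ) := by
    rw [hfr, Nat.cast_sub (by omega)]; simp
  let g : W → Euc n := fun w => stereoInvFunAux v (w : Euc n)
  have hg : ContDiff ℝ 1 g := (contDiff_stereoInvFunAux (v := v)).comp W.subtypeL.contDiff
  have hK : IsCompact (Metric.closedBall (0 : W) 2) := isCompact_closedBall _ _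
  obtain ⟨C, hC⟩ := hg.locallyLipschitz.locallyLipschitzOn.exists_lipschitzOnWith_of_compact hK
  have hsub : {x : Euc n | x ∈ Metric.sphere (0 : Euc n) 1 ∧ ⟪v, x⟫ ≤ 0} ⊆
      g '' (Metric.closedBall (0 : W) 2) := by
    rintro x ⟨hx, hx2⟩
    have hxv : x ≠ v := by
      rintro rfl
      rw [real_inner_self_eq_norm_sq, hv] at hx2
      norm_num at hx2
    refine ⟨stereoToFun v x, ?_, ?_⟩
    · have hx1 : ‖x‖ = 1 := by simpa using hx
      rw [mem_closedBall_zero_iff, stereoToFun_apply, norm_smul]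
      have h2 : ‖(Submodule.span ℝ {v})ᗮ.orthogonalProjectionOnto x‖ ≤ 1 := by
        have := (Submodule.span ℝ {v})ᗮ.norm_orthogonalProjectionOnto_apply_le x
        rwa [hx1] at this
      have h3 : ‖(2 / ((1 : ℝ) - innerSL ℝ v x))‖ ≤ 2 := by
        simp only [innerSL_apply_apply]
        rw [Real.norm_of_nonneg (div_nonneg (by norm_num) (by linarith))]
        rw [div_le_iff₀ (by linarith)]
        linarith
      nlinarith [norm_nonneg (2 / ((1 : ℝ) - innerSL ℝ v x))]
    · have := stereo_left_inv hv (x := ⟨x, hx⟩) hxv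
      exact congrArg Subtype.val this
  refine lt_of_le_of_lt (measure_mono hsub) ?_
  refine lt_of_le_of_lt (hC.hausdorffMeasure_image_le (d := (n : ℝ) - 1) ?_) ?_
  · rw [hd]; positivity
  · rw [hd]
    refine ENNReal.mul_lt_top (ENNReal.rpow_lt_top_of_nonneg (by positivity) (by simp)) ?_
    exact hK.measure_lt_top

/-- The `(n-1)`-dimensional measure on the unit sphere. -/
def sph (n : ℕ) : Measure (Euc n) :=
  (Measure.hausdorffMeasure ((n : ℝ) - 1)).restrict (Metric.sphere (0 : Euc n) 1)

lemma sph_finite {n : ℕ} (hn : 2 ≤ n) : IsFiniteMeasure (sph n) := by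
  refine ⟨?_⟩
  rw [sph, Measure.restrict_apply_univ]
  let v : Euc n := EuclideanSpace.single ⟨0, by omega⟩ 1
  have hv : ‖v‖ = 1 := by simp [v]
  have h1 := halfSphere_lt_top hn v hv
  have h2 := halfSphere_lt_top hn (-v) (by simpa using hv)
  refine lt_of_le_of_lt (measure_mono ?_) (lt_of_le_of_lt (measure_union_le _ _)
    (ENNReal.add_lt_top.2 ⟨h1, h2⟩))
  intro x hx
  rcases le_total ⟪v, x⟫ 0 with h | h
  · exact Or.inl ⟨hx, h⟩
  · exact Or.inr ⟨hx, by simpa [inner_neg_left] using h⟩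

open scoped Pointwise in
lemma sphere_restrict_eq {n : ℕ} (hn : 2 ≤ n) (c : Euc n) {ρ : ℝ} (hρ : 0 < ρ) :
    (Measure.hausdorffMeasure ((n : ℝ) - 1)).restrict (Metric.sphere c ρ) =
      (ENNReal.ofReal (ρ ^ (n - 1))) • (sph n).map (fun x => c + ρ • x) := by
  have hd : (0 : ℝ) ≤ (n : ℝ) - 1 := by
    have : (2 : ℝ) ≤ n := by exact_mod_cast hn
    linarith
  have hm : Measurable (fun x : Euc n => c + ρ • x) := by fun_prop
  ext s hs
  rw [Measure.restrict_apply hs, Measure.smul_apply, Measure.map_apply hm hs, sph,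
    Measure.restrict_apply (hm hs)]
  set A := (fun x : Euc n => c + ρ • x) ⁻¹' s ∩ Metric.sphere 0 1 with hA
  have himg : s ∩ Metric.sphere c ρ = (IsometryEquiv.addLeft c) '' (ρ • A) := by
    ext y
    constructor
    · rintro ⟨h1, h2⟩
      refine ⟨y - c, ⟨ρ⁻¹ • (y - c), ⟨?_, ?_⟩, ?_⟩, ?_⟩
      · simp only [mem_preimage]
        rw [smul_inv_smul₀ hρ.ne']
        simpa using h1
      · rw [mem_sphere_zero_iff_norm, norm_smul, norm_inv, Real.norm_of_nonneg hρ.le]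
        rw [mem_sphere_iff_norm] at h2
        rw [h2, inv_mul_cancel₀ hρ.ne']
      · exact smul_inv_smul₀ hρ.ne' _
      · simp
    · rintro ⟨_, ⟨x, ⟨h1, h2⟩, rfl⟩, rfl⟩
      refine ⟨by simpa using h1, ?_⟩
      rw [mem_sphere_zero_iff_norm] at h2
      simp [mem_sphere_iff_norm, norm_smul, h2, abs_of_pos hρ]
  rw [himg, IsometryEquiv.hausdorffMeasure_image, Measure.hausdorffMeasure_smul₀ hd hρ.ne']
  rw [ENNReal.smul_def]
  congr 1
  rw [ENNReal.ofReal, ENNReal.coe_inj]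
  ext
  rw [Real.coe_toNNReal _ (by positivity)]
  rw [show (n : ℝ) - 1 = ((n - 1 : ℕ) : ℝ) by rw [Nat.cast_sub (by omega)]; simp]
  simp [abs_of_pos hρ]

lemma integral_ewald {n : ℕ} (hn : 2 ≤ n) {E : Type*} [NormedAddCommGroup E] [NormedSpace ℝ E]
    (f : Euc n → E) (η : Euc n) (hη : η ≠ 0) {r : ℝ} (hr : 0 < r) :
    ∫ ξ, f ξ ∂(ewaldM n r η) =
      (r * ‖η‖ / 2) ^ (n - 1) • ∫ θ, f ((2 : ℝ)⁻¹ • η + (r * ‖η‖ / 2) • θ) ∂(sph n) := by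
  have hρ : 0 < r * ‖η‖ / 2 := by have := norm_pos_iff.2 hη; positivity
  rw [ewaldM, sphere_restrict_eq hn _ hρ, integral_smul_measure,
    ENNReal.toReal_ofReal (by positivity)]
  congr 1
  let e : Euc n ≃ₜ Euc n := (Homeomorph.smulOfNeZero _ hρ.ne').trans
    (Homeomorph.addLeft ((2 : ℝ)⁻¹ • η))
  exact e.measurableEmbedding.integral_map f

lemma sph_ae {n : ℕ} : ∀ᵐ x ∂(sph n), x ∈ Metric.sphere (0 : Euc n) 1 :=
  ae_restrict_mem Metric.isClosed_sphere.measurableSet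

lemma integral_sph_neg {n : ℕ} {E : Type*} [NormedAddCommGroup E] [NormedSpace ℝ E]
    (f : Euc n → E) : ∫ θ, f (-θ) ∂(sph n) = ∫ θ, f θ ∂(sph n) := by
  have h := ((IsometryEquiv.neg (Euc n)).measurePreserving_hausdorffMeasure
    ((n : ℝ) - 1)).restrict_preimage
    (s := Metric.sphere (0 : Euc n) 1) Metric.isClosed_sphere.measurableSet
  have h2 : (IsometryEquiv.neg (Euc n)) ⁻¹' (Metric.sphere (0 : Euc n) 1) =
      Metric.sphere (0 : Euc n) 1 := by
    ext x; simp
  rw [h2] at h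
  exact h.integral_comp (IsometryEquiv.neg (Euc n)).toHomeomorph.measurableEmbedding f

/-- Continuous functions are integrable for a finite measure carried by a compact set. -/
lemma integrable_of_compact {n : ℕ} {E : Type*} [NormedAddCommGroup E]
    {μ : Measure (Euc n)} [IsFiniteMeasure μ]
    {K : Set (Euc n)} (hK : IsCompact K) (hμ : ∀ᵐ x ∂μ, x ∈ K) {f : Euc n → E}
    (hf : Continuous f) : Integrable f μ := by
  obtain ⟨C, hC⟩ := hK.exists_bound_of_continuousOn hf.continuousOn
  exact Integrable.of_bound hf.aestronglyMeasurable C (hμ.mono fun x hx => hC x hx)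

lemma hasDerivAt_param {n : ℕ} {μ : Measure (Euc n)} [IsFiniteMeasure μ]
    {K : Set (Euc n)} (hK : IsCompact K) (hμ : ∀ᵐ x ∂μ, x ∈ K) {G : ℝ × Euc n → ℂ}
    (hG : ContDiff ℝ ∞ G) (r : ℝ) :
    HasDerivAt (fun r => ∫ θ, G (r, θ) ∂μ) (∫ θ, fderiv ℝ G (r, θ) (1, 0) ∂μ) r := by
  have hG' : Continuous (fun p => fderiv ℝ G p (1, 0)) :=
    (hG.continuous_fderiv (by simp)).clm_apply continuous_const
  obtain ⟨C, hC⟩ := ((isCompact_closedBall r 1).prod hK).exists_bound_of_continuousOn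
    hG'.continuousOn
  refine (hasDerivAt_integral_of_dominated_loc_of_deriv_le (s := Metric.closedBall r 1)
    (F := fun r θ => G (r, θ)) (F' := fun r θ => fderiv ℝ G (r, θ) (1, 0)) (bound := fun _ => C)
    (Metric.closedBall_mem_nhds r one_pos) ?_ ?_ ?_ ?_ ?_ ?_).2
  · exact Eventually.of_forall fun x => (hG.continuous.comp (by fun_prop)).aestronglyMeasurable
  · exact integrable_of_compact hK hμ (hG.continuous.comp (by fun_prop))
  · exact (hG'.comp (g := fun p => fderiv ℝ G p (1, 0)) (f := fun θ : Euc n => (r, θ))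
      (by fun_prop)).aestronglyMeasurable
  · filter_upwards [hμ] with θ hθ x hx
    exact hC (x, θ) ⟨hx, hθ⟩
  · exact integrable_const _
  · refine Eventually.of_forall fun θ x _ => ?_
    have h1 : HasFDerivAt G (fderiv ℝ G (x, θ)) (x, θ) :=
      (hG.differentiable (by simp)).differentiableAt.hasFDerivAt
    have h2 : HasDerivAt (fun x : ℝ => (x, θ)) (1, 0) x :=
      (hasDerivAt_id x).prodMk (hasDerivAt_const x θ)
    exact h1.comp_hasDerivAt x h2

lemma contDiff_param {n : ℕ} {μ : Measure (Euc n)} [IsFiniteMeasure μ]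
    {K : Set (Euc n)} (hK : IsCompact K) (hμ : ∀ᵐ x ∂μ, x ∈ K) {G : ℝ × Euc n → ℂ}
    (hG : ContDiff ℝ ∞ G) : ContDiff ℝ ∞ (fun r => ∫ θ, G (r, θ) ∂μ) := by
  rw [contDiff_infty]
  intro k
  induction k generalizing G with
  | zero =>
    exact contDiff_zero.2 (continuous_iff_continuousAt.2 fun r =>
      (hasDerivAt_param hK hμ hG r).continuousAt)
  | succ k ih =>
    have hG' : ContDiff ℝ ∞ (fun p => fderiv ℝ G p (1, 0)) :=
      (hG.fderiv_right (m := ∞) (by simp)).clm_apply contDiff_const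
    push_cast
    rw [contDiff_succ_iff_deriv]
    refine ⟨fun r => (hasDerivAt_param hK hμ hG r).differentiableAt, by simp, ?_⟩
    rw [show deriv (fun r => ∫ θ, G (r, θ) ∂μ) = fun r => ∫ θ, fderiv ℝ G (r, θ) (1, 0) ∂μ from
      funext fun r => (hasDerivAt_param hK hμ hG r).deriv]
    have hfin := ih hG'
    exact hfin

/-- The bilinear pairing giving our normalisation of the Fourier transform. -/
def pairL (n : ℕ) : Euc n →L[ℝ] Euc n →L[ℝ] ℝ := (2 * Real.pi)⁻¹ • innerSL ℝ

lemma pairL_apply {n : ℕ} (x ξ : Euc n) : pairL n x ξ = (2 * Real.pi)⁻¹ * ⟪ξ, x⟫ := by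
  rw [real_inner_comm]; rfl

lemma pairL_apply' {n : ℕ} (x ξ : Euc n) :
    (pairL n).toLinearMap₁₂ x ξ = (2 * Real.pi)⁻¹ * ⟪ξ, x⟫ := pairL_apply x ξ

lemma ft_eq_s6 {n : ℕ} (f : Euc n → ℂ) :
    ft f = VectorFourier.fourierIntegral Real.fourierChar volume (pairL n).toLinearMap₁₂ f := by
  ext ξ
  rw [ft, VectorFourier.fourierIntegral]
  congr 1
  ext x
  rw [Circle.smul_def, Real.fourierChar_apply, smul_eq_mul]
  congr 2
  rw [pairL_apply']
  push_cast
  have : (Real.pi : ℂ) ≠ 0 := by exact_mod_cast Real.pi_ne_zero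
  field_simp

lemma contDiff_ft {n : ℕ} (q : SchwartzMap (Euc n) ℂ) : ContDiff ℝ ∞ (ft ⇑q) := by
  rw [ft_eq_s6]
  exact VectorFourier.contDiff_fourierIntegral (N := ⊤) _ fun k _ => q.integrable_pow_mul volume k

lemma fderiv_ft {n : ℕ} (q : SchwartzMap (Euc n) ℂ) (ξ : Euc n) (i : Fin n) :
    fderiv ℝ (ft ⇑q) ξ (EuclideanSpace.single i 1) =
      -Complex.I * ft (fun x : Euc n => ((x i : ℝ) : ℂ) * q x) ξ := by
  have h1 : Integrable (fun v => ‖v‖ * ‖q v‖) := by simpa using q.integrable_pow_mul volume 1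
  have h := (VectorFourier.hasFDerivAt_fourierIntegral (pairL n) q.integrable h1 ξ).fderiv
  rw [ft_eq_s6 ⇑q, h, Real.fourierIntegral_continuousLinearMap_apply', ft,
    VectorFourier.fourierIntegral, ← integral_const_mul]
  · congr 1
    ext x
    rw [Circle.smul_def, Real.fourierChar_apply, smul_eq_mul,
      VectorFourier.fourierSMulRight_apply]
    rw [pairL_apply', pairL_apply, EuclideanSpace.inner_single_left]
    have : (Real.pi : ℂ) ≠ 0 := by exact_mod_cast Real.pi_ne_zero
    have e : Complex.exp (((2 * Real.pi * -((2 * Real.pi)⁻¹ * ⟪ξ, x⟫) : ℝ) : ℂ) * Complex.I) =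
        Complex.exp (-Complex.I * ((⟪ξ, x⟫ : ℝ) : ℂ)) := by
      congr 1
      push_cast
      field_simp
    rw [e]
    simp only [Complex.real_smul, smul_eq_mul]
    push_cast
    simp
    field_simp
  · refine (h1.const_mul (2 * Real.pi * ‖pairL n‖)).mono'
      q.continuous.aestronglyMeasurable.fourierSMulRight (Eventually.of_forall fun x => ?_)
    have := VectorFourier.norm_fourierSMulRight_le (pairL n) (⇑q) x
    linarith

lemma fderiv_ft_norm_le {n : ℕ} (q : SchwartzMap (Euc n) ℂ) (ξ v : Euc n) (hv : ‖v‖ ≤ 1) :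
    ‖fderiv ℝ (ft ⇑q) ξ v‖ ≤ ∑ i, ‖ft (fun x : Euc n => ((x i : ℝ) : ℂ) * q x) ξ‖ := by
  have h : v = ∑ i, v i • EuclideanSpace.single i (1 : ℝ) := by
    ext j
    simp [Finset.sum_apply, Pi.single_apply]
  conv_lhs => rw [h]
  rw [map_sum]
  refine (norm_sum_le _ _).trans (Finset.sum_le_sum fun i _ => ?_)
  rw [map_smul, fderiv_ft, norm_smul, norm_mul, norm_neg, Complex.norm_I, one_mul]
  exact mul_le_of_le_one_left (norm_nonneg _) ((PiLp.norm_apply_le v i).trans hv)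

lemma continuous_ft_mul {n : ℕ} (q : SchwartzMap (Euc n) ℂ) (i : Fin n) :
    Continuous (ft (fun x : Euc n => ((x i : ℝ) : ℂ) * q x)) := by
  have h : ft (fun x : Euc n => ((x i : ℝ) : ℂ) * q x) =
      fun ξ => Complex.I * fderiv ℝ (ft ⇑q) ξ (EuclideanSpace.single i 1) := by
    ext ξ
    rw [fderiv_ft, ← mul_assoc]
    simp
  rw [h]
  exact continuous_const.mul
    (((contDiff_ft q).continuous_fderiv (by simp)).clm_apply continuous_const)

/-- The point of the Ewald sphere with direction `θ`. -/
def ewPt {n : ℕ} (η : Euc n) (r : ℝ) (θ : Euc n) : Euc n :=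
  (2 : ℝ)⁻¹ • η + (r * ‖η‖ / 2) • θ

lemma ewPt_neg {n : ℕ} (η : Euc n) (r : ℝ) (θ : Euc n) :
    ewPt η r (-θ) = η - ewPt η r θ := by
  unfold ewPt
  module

/-- The integrand on the unit sphere. -/
def ewG {n : ℕ} (q : SchwartzMap (Euc n) ℂ) (η : Euc n) (p : ℝ × Euc n) : ℂ :=
  ft ⇑q (ewPt η p.1 p.2) * ft ⇑q (η - ewPt η p.1 p.2)

/-- The scalar prefactor. -/
def ewA (n : ℕ) (t : ℝ) (r : ℝ) : ℝ := 2 / (t * (1 + r)) * (r * t / 2) ^ (n - 1)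

lemma contDiff_ewG {n : ℕ} (q : SchwartzMap (Euc n) ℂ) (η : Euc n) : ContDiff ℝ ∞ (ewG q η) := by
  have h : ContDiff ℝ ∞ (fun p : ℝ × Euc n => ewPt η p.1 p.2) := by
    unfold ewPt
    fun_prop
  exact ((contDiff_ft q).comp h).mul ((contDiff_ft q).comp (contDiff_const.sub h))

lemma continuous_ewPt {n : ℕ} (η : Euc n) (r : ℝ) : Continuous (ewPt η r) := by
  unfold ewPt
  fun_prop

lemma Sr_eq {n : ℕ} (hn : 2 ≤ n) (q : SchwartzMap (Euc n) ℂ) (η : Euc n) (hη : η ≠ 0) {r : ℝ}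
    (hr : 0 < r) : Sr r (⇑q) η = ewA n ‖η‖ r • ∫ θ, ewG q η (r, θ) ∂(sph n) := by
  rw [Sr, integral_ewald hn _ η hη hr, smul_smul]
  rfl

lemma Kr_eq {n : ℕ} (hn : 2 ≤ n) (f g : Euc n → ℂ) (η : Euc n) (hη : η ≠ 0) {r : ℝ}
    (hr : 0 < r) : Kr r f g η = ‖η‖⁻¹ * ((r * ‖η‖ / 2) ^ (n - 1) *
      ∫ θ, ‖f (ewPt η r θ)‖ * ‖g (η - ewPt η r θ)‖ ∂(sph n)) := by
  rw [Kr, integral_ewald hn _ η hη hr]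
  rfl

lemma contDiffOn_Sr {n : ℕ} (hn : 2 ≤ n) (q : SchwartzMap (Euc n) ℂ) (η : Euc n) (hη : η ≠ 0) :
    ContDiffOn ℝ (⊤ : ℕ∞) (fun r : ℝ => Sr r (⇑q) η) (Set.Ioi 0) := by
  have := sph_finite hn
  have hpos := norm_pos_iff.2 hη
  have hI := contDiff_param (isCompact_sphere (0 : Euc n) 1) sph_ae (contDiff_ewG q η)
  have hA : ContDiffOn ℝ ∞ (ewA n ‖η‖) (Set.Ioi 0) := by
    unfold ewA
    refine ContDiffOn.mul (ContDiffOn.div contDiffOn_const (by fun_prop) ?_) (by fun_prop)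
    intro r hr
    have : (0 : ℝ) < r := hr
    positivity
  exact (hA.smul hI.contDiffOn).congr fun r hr => Sr_eq hn q η hη hr

lemma ewG_deriv_le {n : ℕ} (q : SchwartzMap (Euc n) ℂ) (η : Euc n) (r : ℝ) (θ : Euc n)
    (hθ : ‖θ‖ ≤ 1) :
    ‖fderiv ℝ (ewG q η) (r, θ) (1, 0)‖ ≤ ‖η‖ / 2 *
      ((∑ i, ‖ft (fun x : Euc n => ((x i : ℝ) : ℂ) * q x) (ewPt η r θ)‖ *
          ‖ft ⇑q (η - ewPt η r θ)‖) +
       (∑ i, ‖ft (fun x : Euc n => ((x i : ℝ) : ℂ) * q x) (ewPt η r (-θ))‖ *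
          ‖ft ⇑q (η - ewPt η r (-θ))‖)) := by
  have h1 : HasDerivAt (fun x : ℝ => ewG q η (x, θ)) (fderiv ℝ (ewG q η) (r, θ) (1, 0)) r := by
    have h1 : HasFDerivAt (ewG q η) (fderiv ℝ (ewG q η) (r, θ)) (r, θ) :=
      ((contDiff_ewG q η).differentiable (by simp)).differentiableAt.hasFDerivAt
    have h2 : HasDerivAt (fun x : ℝ => (x, θ)) (1, 0) r :=
      (hasDerivAt_id r).prodMk (hasDerivAt_const r θ)
    exact h1.comp_hasDerivAt r h2
  have hp : HasDerivAt (fun x : ℝ => ewPt η x θ) ((‖η‖ / 2) • θ) r := by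
    have : HasDerivAt (fun x : ℝ => x * ‖η‖ / 2) (‖η‖ / 2) r := by
      simpa using ((hasDerivAt_id r).mul_const ‖η‖).div_const 2
    exact (this.smul_const θ).const_add _
  have hq : ∀ ξ, HasFDerivAt (ft ⇑q) (fderiv ℝ (ft ⇑q) ξ) ξ := fun ξ =>
    ((contDiff_ft q).differentiable (by simp)).differentiableAt.hasFDerivAt
  have h2 : HasDerivAt (fun x : ℝ => ewG q η (x, θ)) _ r :=
    ((hq _).comp_hasDerivAt r hp).mul ((hq _).comp_hasDerivAt r (hp.const_sub η))
  rw [h1.unique h2]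
  have hη : 0 ≤ ‖η‖ / 2 := by positivity
  have b1 := fderiv_ft_norm_le q (ewPt η r θ) θ hθ
  have b2 := fderiv_ft_norm_le q (η - ewPt η r θ) θ hθ
  refine (norm_add_le _ _).trans ?_
  rw [ewPt_neg, sub_sub_cancel, ← Finset.sum_mul, ← Finset.sum_mul, mul_add]
  simp only [Function.comp_apply, map_neg, map_smul, norm_mul, norm_neg, norm_smul,
    Real.norm_of_nonneg hη]
  refine add_le_add ?_ ?_
  · rw [mul_assoc]
    gcongr
  · rw [mul_left_comm, mul_comm ‖ft ⇑q (ewPt η r θ)‖]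
    gcongr

lemma ewA_deriv {n : ℕ} (hn : 2 ≤ n) {t r : ℝ} (ht : 0 < t) (hr : 0 < r) :
    HasDerivAt (ewA n t) (ewA n t r * (((n : ℝ) - 1) / r - 1 / (1 + r))) r := by
  obtain ⟨m, rfl⟩ := Nat.exists_eq_add_of_le hn
  have h1 : HasDerivAt (fun x : ℝ => x * t / 2) (t / 2) r := by
    simpa using ((hasDerivAt_id r).mul_const t).div_const 2
  have h2 : HasDerivAt (fun x : ℝ => t * (1 + x)) t r := by
    simpa using ((hasDerivAt_id r).const_add 1).const_mul t
  have hne : t * (1 + r) ≠ 0 := by positivity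
  have h3 := ((hasDerivAt_const r (2 : ℝ)).div h2 hne).mul (h1.pow (2 + m - 1))
  refine h3.congr_deriv ?_
  have e1 : 2 + m - 1 = m + 1 := by omega
  simp only [ewA, e1, Pi.div_apply, Pi.pow_apply]
  push_cast
  have : 1 + r ≠ 0 := by positivity
  field_simp
  ring

lemma deriv_Sr_le {n : ℕ} (hn : 2 ≤ n) {δ : ℝ} (hδ : δ < 1)
    (q : SchwartzMap (Euc n) ℂ) (η : Euc n) (hη : η ≠ 0) {r : ℝ} (hr : 1 - δ < r) :
    ‖deriv (fun s : ℝ => Sr s (⇑q) η) r‖ ≤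
      (2 * (((n : ℝ) - 1) / (1 - δ) + 1)) * Kr r (ft ⇑q) (ft ⇑q) η +
        (2 * (((n : ℝ) - 1) / (1 - δ) + 1)) * ‖η‖ * ∑ i : Fin n,
          Kr r (ft fun x : Euc n => ((x i : ℝ) : ℂ) * q x) (ft ⇑q) η := by
  have := sph_finite hn
  have hn' : (2 : ℝ) ≤ n := by exact_mod_cast hn
  have hδ' : 0 < 1 - δ := by linarith
  have hr0 : 0 < r := by linarith
  have hpos := norm_pos_iff.2 hη
  have hI := hasDerivAt_param (isCompact_sphere (0 : Euc n) 1) sph_ae (contDiff_ewG q η) r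
  have hA := ewA_deriv hn hpos hr0
  have hev : (fun s : ℝ => Sr s (⇑q) η) =ᶠ[nhds r]
      fun s => ewA n ‖η‖ s • ∫ θ, ewG q η (s, θ) ∂(sph n) := by
    filter_upwards [Ioi_mem_nhds hr0] with s hs
    exact Sr_eq hn q η hη hs
  have hder : HasDerivAt (fun s => ewA n ‖η‖ s • ∫ θ, ewG q η (s, θ) ∂(sph n)) _ r := hA.smul hI
  rw [hev.deriv_eq, hder.deriv]
  have hc := continuous_ewPt η r
  have hcq := (contDiff_ft q).continuous
  have hintg : ∀ i : Fin n, Integrable (fun θ =>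
      ‖ft (fun x : Euc n => ((x i : ℝ) : ℂ) * q x) (ewPt η r θ)‖ *
          ‖ft ⇑q (η - ewPt η r θ)‖) (sph n) := fun i =>
    integrable_of_compact (isCompact_sphere (0 : Euc n) 1) sph_ae
      ((((continuous_ft_mul q i).comp hc).norm).mul
        ((hcq.comp (continuous_const.sub hc)).norm))
  set J := ∫ θ, ‖ft ⇑q (ewPt η r θ)‖ * ‖ft ⇑q (η - ewPt η r θ)‖ ∂(sph n) with hJ
  let H : Euc n → ℝ := fun θ => ∑ i, ‖ft (fun x : Euc n => ((x i : ℝ) : ℂ) * q x) (ewPt η r θ)‖ *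
          ‖ft ⇑q (η - ewPt η r θ)‖
  have hHi : Integrable H (sph n) := integrable_finset_sum _ fun i _ => hintg i
  have hHc : Continuous H := continuous_finset_sum _ fun i _ =>
    (((continuous_ft_mul q i).comp hc).norm).mul ((hcq.comp (continuous_const.sub hc)).norm)
  have hHi' : Integrable (fun θ => H (-θ)) (sph n) :=
    integrable_of_compact (isCompact_sphere (0 : Euc n) 1) sph_ae (hHc.comp continuous_neg)
  set M := ∫ θ, H θ ∂(sph n) with hM
  have hJ0 : 0 ≤ J := integral_nonneg fun θ => by positivity
  have hM0 : 0 ≤ M := integral_nonneg fun θ => by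
    exact Finset.sum_nonneg fun i _ => by positivity
  have hIJ : ‖∫ θ, ewG q η (r, θ) ∂(sph n)‖ ≤ J := by
    refine (norm_integral_le_integral_norm _).trans (le_of_eq ?_)
    simp only [ewG, norm_mul, hJ]
  have hDM : ‖∫ θ, fderiv ℝ (ewG q η) (r, θ) (1, 0) ∂(sph n)‖ ≤ ‖η‖ * M := by
    have h1 : ‖∫ θ, fderiv ℝ (ewG q η) (r, θ) (1, 0) ∂(sph n)‖ ≤
        ∫ θ, ‖η‖ / 2 * (H θ + H (-θ)) ∂(sph n) := by
      refine norm_integral_le_of_norm_le ((hHi.add hHi').const_mul _) ?_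
      filter_upwards [sph_ae] with θ hθ
      exact ewG_deriv_le q η r θ (by rw [mem_sphere_zero_iff_norm] at hθ; exact hθ.le)
    rw [integral_const_mul, integral_add hHi hHi', integral_sph_neg H] at h1
    refine h1.trans (le_of_eq ?_)
    rw [← hM]; ring
  have hS : ∑ i : Fin n, Kr r (ft fun x : Euc n => ((x i : ℝ) : ℂ) * q x) (ft ⇑q) η =
      ‖η‖⁻¹ * ((r * ‖η‖ / 2) ^ (n - 1) * M) := by
    rw [hM, integral_finset_sum _ fun i _ => hintg i, Finset.mul_sum, Finset.mul_sum]
    exact Finset.sum_congr rfl fun i _ => Kr_eq hn _ _ η hη hr0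
  rw [hS, Kr_eq hn _ _ η hη hr0, ← hJ]
  set p := (r * ‖η‖ / 2) ^ (n - 1) with hp
  have hp0 : 0 ≤ p := by positivity
  have hA0 : 0 ≤ ewA n ‖η‖ r := by unfold ewA; positivity
  have hA2 : ewA n ‖η‖ r ≤ 2 * (‖η‖⁻¹ * p) := by
    rw [ewA, ← hp, ← mul_assoc]
    refine mul_le_mul_of_nonneg_right ?_ hp0
    rw [← div_eq_mul_inv]
    refine div_le_div_of_nonneg_left (by norm_num) hpos ?_
    nlinarith
  set B := ((n : ℝ) - 1) / (1 - δ) + 1 with hB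
  have hB1 : 1 ≤ B := by
    have : 0 ≤ ((n : ℝ) - 1) / (1 - δ) := div_nonneg (by linarith) hδ'.le
    linarith
  have hL : |((n : ℝ) - 1) / r - 1 / (1 + r)| ≤ B := by
    have e1 : ((n : ℝ) - 1) / r ≤ ((n : ℝ) - 1) / (1 - δ) :=
      div_le_div_of_nonneg_left (by linarith) hδ' hr.le
    have e2 : 0 ≤ ((n : ℝ) - 1) / r := div_nonneg (by linarith) hr0.le
    have e3 : 0 ≤ 1 / (1 + r) := by positivity
    have e4 : 1 / (1 + r) ≤ 1 := by rw [div_le_one (by linarith)]; linarith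
    rw [abs_le]
    constructor <;> linarith
  set A := ewA n ‖η‖ r with hAdef
  have t1 : ‖A • ∫ θ, fderiv ℝ (ewG q η) (r, θ) (1, 0) ∂(sph n)‖ ≤
      2 * B * ‖η‖ * (‖η‖⁻¹ * (p * M)) := by
    rw [norm_smul, Real.norm_of_nonneg hA0]
    calc _ ≤ (2 * (‖η‖⁻¹ * p)) * (‖η‖ * M) := by gcongr
      _ = 2 * 1 * ‖η‖ * (‖η‖⁻¹ * (p * M)) := by ring
      _ ≤ _ := by gcongr
  have t2 : ‖(A * (((n : ℝ) - 1) / r - 1 / (1 + r))) • ∫ θ, ewG q η (r, θ) ∂(sph n)‖ ≤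
      2 * B * (‖η‖⁻¹ * (p * J)) := by
    rw [norm_smul, norm_mul, Real.norm_of_nonneg hA0, Real.norm_eq_abs]
    calc _ ≤ (2 * (‖η‖⁻¹ * p)) * B * J := by gcongr
      _ = _ := by ring
  refine (norm_add_le _ _).trans ?_
  linarith

/-- for Schwartz `q`, the map `r ↦ S_r(q)(η)` is smooth on `(0,∞)` for every
`η ≠ 0`, and for every `0 < δ < 1` there is a constant `C` (depending on `n` and `δ` only)
such that for `η ≠ 0` and `r ∈ (1-δ, 1+δ)`,
`|∂_r S_r(q)(η)| ≤ C K_r(q̂,q̂)(η) + C |η| ∑ᵢ K_r((xᵢq)^∧, q̂)(η)`. -/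
theorem stmt6 (n : ℕ) (hn : 2 ≤ n) :
    (∀ (q : SchwartzMap (Euc n) ℂ) (η : Euc n), η ≠ 0 →
        ContDiffOn ℝ (⊤ : ℕ∞) (fun r : ℝ => Sr r (⇑q) η) (Set.Ioi 0)) ∧
      ∀ δ : ℝ, 0 < δ → δ < 1 → ∃ C : ℝ, 0 < C ∧
        ∀ (q : SchwartzMap (Euc n) ℂ) (η : Euc n), η ≠ 0 →
          ∀ r ∈ Set.Ioo (1 - δ) (1 + δ),
            ‖deriv (fun s : ℝ => Sr s (⇑q) η) r‖ ≤
              C * Kr r (ft ⇑q) (ft ⇑q) η +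
                C * ‖η‖ * ∑ i : Fin n,
                  Kr r (ft fun x : Euc n => ((x i : ℝ) : ℂ) * q x) (ft ⇑q) η := by
  refine ⟨fun q η hη => contDiffOn_Sr hn q η hη, fun δ _ hδ1 => ?_⟩
  refine ⟨2 * (((n : ℝ) - 1) / (1 - δ) + 1), ?_, fun q η hη r hr =>
    deriv_Sr_le hn hδ1 q η hη hr.1⟩
  have h1 : 0 ≤ ((n : ℝ) - 1) / (1 - δ) := by
    have : (2 : ℝ) ≤ n := by exact_mod_cast hn
    exact div_nonneg (by linarith) (by linarith)
  linarith
end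
end
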